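/- arXiv:2412.18002 — 8 statements merged into one kernel-verified Lean document; each statement's English description precedes it below -/
import Mathlib

section
/- For every integer k ≥ 1892, there exists a k-nice set Q ⊆ ℤ² of height at most three such that every k-nice set has cardinality at most the cardinality of Q (i.e., Q is a k-nice set of maximum size). -/
/-- A set `Q ⊆ ℤ²` is `k`-nice if every element is a nonzero coprime pair,
`Q` does not contain both a pair and its negation, and all cross determinants
are bounded by `k` in absolute value. -/
def IsKNice (k : ℕ) (Q : Set (ℤ × ℤ)) : Prop :=
  (∀ p ∈ Q, p ≠ (0, 0) ∧ Int.gcd p.1 p.2 = 1) ∧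
  (∀ p ∈ Q, -p ∉ Q) ∧
  (∀ p ∈ Q, ∀ q ∈ Q, |p.1 * q.2 - q.1 * p.2| ≤ (k : ℤ))

/-- `Q` is y-non-negative: all second coordinates are non-negative. -/
def YNonneg (Q : Set (ℤ × ℤ)) : Prop := ∀ p ∈ Q, 0 ≤ p.2

/-- The height of `Q` is at most `h`. -/
def HeightLe (Q : Set (ℤ × ℤ)) (h : ℕ) : Prop := ∀ p ∈ Q, |p.2| ≤ (h : ℤ)

/-- The height of `Q` is exactly `h`: the maximum of `|n|` over `(m, n) ∈ Q` is `h`. -/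
def HeightEq (Q : Set (ℤ × ℤ)) (h : ℕ) : Prop :=
  HeightLe Q h ∧ ∃ p ∈ Q, |p.2| = (h : ℤ)

/-- Packed table (10 bits per entry) of the totients of `1, …, 336`. -/
def totTab : ℕ := 278113540639393467869812664328026063748867296382629809716719924816479990947226525591006331036324488841227130595188735337426770672541675026301079886276279855090600296552897250781816208991547523869544343336395092889167777728557979326503835271824032314431998388269693372569524388582388717451134970780829821242464876941839397888227562938391062535069984944854123518226201384499728864939184467576799134750663666123887489110389588442874365159150278841096927014485522823566655656527462190178580161564939504076241176984043958087560168791078857402490587133230112288447960487755635030426228119452149548763312445875040154253874044952196044034533803146647287581668498668935607704166318437501259506272545271699241071618505703804090077722562075872763404776742758318672874947865492992444446743508177592850427742875096266915694560229432953467486512598672280564588259260862845184176694521725328357886893200314550727804824466520083456087267157694735318466249992971308100059694498501247160715171321861768026132465904241097093430641664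

/-- Packed table (10 bits per entry) of discrepancy bounds for `1, …, 336`. -/
def discTab : ℕ := 1110952189867495595385785587141996339564946564439757215305369529260695847498498701980341103574647641550791773544340088720305843382252994625890941321013015569856501731794650470819565889725739750864099992852364038594241461643418087380036260121284765903581793703635805475330366332440553070294493076940794417112140198834529347406295748946946184955854442738601031343482940829221963903090578812882696005698965503308900111662117935770705437589223178340583696444061886900001605926714041756370225712224159288323340605649149127592492181261976984180699363005641853949117009234641018459978917488519844120512156135323841554537760465568255260587759656376759977640089089430205201388538824605838778401835844744793880110026302018661119500805012666904022865862212264180471542543119730483337927223669835323016835423270123268506605239961576737151695830019667268003620360227512131133800570838926845827208096835972335965123765491703426509204011669505770299897444353861681362053420698546230374334744477298486806997056706528232754425888768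

def totT (n : ℕ) : ℕ := totTab / 2 ^ (10 * n) % 1024

def discT (n : ℕ) : ℕ := discTab / 2 ^ (10 * n) % 1024

/-- Shift used in the lower discrepancy bound. -/
def shiftX (n : ℕ) : ℕ := if n = 1 then 0 else n

/-- Checks that `φ` and `hi` bound the distribution of the units modulo `d`. -/
def unitLoop (d φ hi X : ℕ) : ℕ → ℕ → ℕ → Bool
  | 0, _, cnt => Nat.beq cnt φ
  | f + 1, r, cnt =>
    bif Nat.beq (Nat.gcd (r + 1) d) 1 then
      (Nat.ble (d * (cnt + 1)) (φ * (r + 1) + hi) &&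
        Nat.ble (φ * (r + 1) + X) (d * (cnt + 1) + hi)) &&
        unitLoop d φ hi X f (r + 1) (cnt + 1)
    else unitLoop d φ hi X f (r + 1) cnt

def unitOk (d φ hi : ℕ) : Bool := unitLoop d φ hi (shiftX d) d 0 0

/-- Checks the table for all `n ≤ N`. -/
def tabLoop : ℕ → Bool
  | 0 => true
  | n + 1 => unitOk (n + 1) (totT (n + 1)) (discT (n + 1)) && tabLoop n

/-- Scaled density of the units modulo `n`, rounded up. -/
def aC (n : ℕ) : ℕ := 10 ^ 9 * totT n / n + 1

/-- Scaled error term for the units modulo `n`, rounded up. -/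
def eC (n : ℕ) : ℕ := 10 ^ 9 * (n + 2 * discT n - shiftX n) / n + 1

/-- Greedy dual solution of the linear program. -/
def greedy : ℕ → ℕ → ℕ → ℕ → ℕ
  | 0, i, ri, rj => (ri + rj) / (2 * i) + 1
  | d + 1, i, ri, rj =>
    bif Nat.ble (ri * i) (rj * (i + (d + 1))) then
      (ri / (i + (d + 1)) + 1) +
        greedy d (i + 1) (bif Nat.beq d 0 then 0 else aC (i + 1)) (rj - ri * i / (i + (d + 1)))
    else
      (rj / i + 1) +
        greedy d i (ri - rj * (i + (d + 1)) / i) (bif Nat.beq d 0 then 0 else aC (i + d))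

/-- The numerical inequality needed at height `h`, where `E` is the sum of the error terms. -/
def ineqOk (h E : ℕ) : Bool :=
  Nat.ble (2 * 10 ^ 9) E && Nat.blt (E + max 1892 ((3 * h * h + 3) / 4) * (2 * greedy (h - 1) 1 (aC 1) (aC h)))
    (2 * 10 ^ 9 + max 1892 ((3 * h * h + 3) / 4) * 10 ^ 9)

def runLoop : ℕ → ℕ → ℕ → Bool
  | 0, _, _ => true
  | f + 1, h, E =>
    (Nat.blt h 3 || ineqOk (h + 1) (E + eC (h + 1))) && runLoop f (h + 1) (E + eC (h + 1))
theorem tab_ok : tabLoop 336 = true := by decide +kernel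
theorem run_ok : runLoop 336 0 0 = true := by decide +kernel
/-- The number of units modulo `d` in `{1, …, x}`. -/
def unitCnt (d : ℕ) : ℕ → ℕ
  | 0 => 0
  | r + 1 => unitCnt d r + if Nat.gcd (r + 1) d = 1 then 1 else 0

theorem unitLoop_sound (d φ hi X : ℕ) : ∀ f r : ℕ,
    unitLoop d φ hi X f r (unitCnt d r) = true →
    unitCnt d (r + f) = φ ∧ ∀ s, r < s → s ≤ r + f → Nat.gcd s d = 1 →
      d * unitCnt d s ≤ φ * s + hi ∧ φ * s + X ≤ d * unitCnt d s + hi := by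
  intro f
  induction f with
  | zero =>
    intro r hr
    simp only [unitLoop] at hr
    exact ⟨by simpa using hr, fun s h1 h2 => by omega⟩
  | succ f ih =>
    intro r hr
    have key : unitLoop d φ hi X f (r + 1) (unitCnt d (r + 1)) = true ∧
        (Nat.gcd (r + 1) d = 1 → d * unitCnt d (r + 1) ≤ φ * (r + 1) + hi ∧
          φ * (r + 1) + X ≤ d * unitCnt d (r + 1) + hi) := by
      by_cases hg : Nat.gcd (r + 1) d = 1
      · have hb : Nat.beq (Nat.gcd (r + 1) d) 1 = true := by simpa using hg
        simp only [unitLoop, hb, cond_true, Bool.and_eq_true, Nat.ble_eq] at hr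
        simp only [unitCnt, hg, if_true]
        exact ⟨hr.2, fun _ => hr.1⟩
      · have hb : Nat.beq (Nat.gcd (r + 1) d) 1 = false := by
          rw [Bool.eq_false_iff]; simpa using hg
        simp only [unitLoop, hb, cond_false] at hr
        simp only [unitCnt, hg, if_false]
        exact ⟨hr, fun h => by simp at h⟩
    obtain ⟨h1, h2⟩ := ih (r + 1) key.1
    refine ⟨by rw [← h1]; congr 1; omega, fun s hs1 hs2 hs => ?_⟩
    rcases Nat.lt_or_ge (r + 1) s with h | h
    · exact h2 s h (by omega) hs
    · have : s = r + 1 := by omega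
      subst this
      exact key.2 hs

theorem unitCnt_add (d : ℕ) (x : ℕ) : unitCnt d (x + d) = unitCnt d x + unitCnt d d := by
  induction x with
  | zero => simp [unitCnt]
  | succ x ih =>
    have : x + 1 + d = (x + d) + 1 := by omega
    rw [this, unitCnt, ih, unitCnt]
    have : Nat.gcd (x + d + 1) d = Nat.gcd (x + 1) d := by
      rw [show x + d + 1 = (x + 1) + d by omega, Nat.gcd_add_self_left]
    simp only [this]; omega

theorem unitOk_sound (d φ hi : ℕ) (hd : 1 ≤ d) (h : unitOk d φ hi = true) :
    ∀ s, 1 ≤ s → Nat.gcd s d = 1 →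
      d * unitCnt d s ≤ φ * s + hi ∧ φ * s + shiftX d ≤ d * unitCnt d s + hi := by
  obtain ⟨h1, h2⟩ := unitLoop_sound d φ hi (shiftX d) d 0 h
  rw [Nat.zero_add] at h1 h2
  intro s
  induction s using Nat.strong_induction_on with
  | _ s ih =>
    intro hs hg
    rcases Nat.lt_or_ge d s with hlt | hge
    · obtain ⟨t, rfl⟩ : ∃ t, s = t + d := ⟨s - d, by omega⟩
      have := ih t (by omega) (by omega) (by simpa using hg)
      rw [unitCnt_add, h1]
      constructor <;> nlinarith [this.1, this.2]
    · exact h2 s (by omega) hge hg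

theorem card_le_unitCnt (d : ℕ) (T : Finset ℕ) (a b : ℕ) (hab : a ≤ b)
    (hT : ∀ x ∈ T, a < x ∧ x ≤ b ∧ Nat.gcd x d = 1) : T.card + unitCnt d a ≤ unitCnt d b := by
  induction b, hab using Nat.le_induction generalizing T with
  | base =>
    have : T = ∅ := by
      apply Finset.eq_empty_of_forall_notMem
      intro x hx
      have := hT x hx
      omega
    simp [this]
  | succ b hb ih =>
    have h1 := ih (T.erase (b + 1)) (by
      intro x hx
      rw [Finset.mem_erase] at hx
      have := hT x hx.2
      exact ⟨this.1, by omega, this.2.2⟩)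
    by_cases hm : b + 1 ∈ T
    · have h2 := Finset.card_erase_add_one hm
      have h3 := (hT _ hm).2.2
      simp only [unitCnt, h3, if_true]
      omega
    · rw [Finset.erase_eq_of_notMem hm] at h1
      simp only [unitCnt]
      omega

/-- Counting lemma: the number of units modulo `d` in an interval. -/
theorem count_le (d φ hi : ℕ) (hd : 1 ≤ d) (h : unitOk d φ hi = true) (S : Finset ℤ) (A B : ℤ)
    (hA : A ∈ S) (hB : B ∈ S) (hS : ∀ x ∈ S, A ≤ x ∧ x ≤ B ∧ Int.gcd x d = 1) :
    (d : ℤ) * S.card + shiftX d ≤ φ * (B - A) + (d + 2 * hi) := by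
  have hdz : (1 : ℤ) ≤ d := by exact_mod_cast hd
  obtain ⟨t, ht⟩ : ∃ t : ℤ, 1 ≤ A + d * t := ⟨|A| + 1, by
    have := neg_abs_le A
    nlinarith [abs_nonneg A]⟩
  set g : ℤ → ℕ := fun x => (x + d * t).toNat with hg
  have hgv : ∀ x ∈ S, ((g x : ℕ) : ℤ) = x + d * t := by
    intro x hx
    have := hS x hx
    simp only [hg]
    rw [Int.toNat_of_nonneg (by linarith [this.1])]
  have hgg : ∀ x ∈ S, Nat.gcd (g x) d = 1 := by
    intro x hx
    have h1 : Int.gcd ((g x : ℕ) : ℤ) d = 1 := by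
      rw [hgv x hx]
      simpa using (hS x hx).2.2
    simpa using h1
  have hA1 : 1 ≤ g A := by have := hgv A hA; omega
  have hinj : Set.InjOn g S := by
    intro x hx y hy hxy
    have h1 := hgv x hx
    have h2 := hgv y hy
    rw [hxy] at h1
    linarith
  have hc := Finset.card_image_of_injOn hinj
  have hABn : g A ≤ g B := by
    have h1 := hgv A hA
    have h2 := hgv B hB
    have := (hS B hB).1
    omega
  have hcard := card_le_unitCnt d ((S.image g).erase (g A)) (g A) (g B) hABn (by
    intro x hx
    rw [Finset.mem_erase, Finset.mem_image] at hx
    obtain ⟨hne, y, hy, rfl⟩ := hx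
    have h1 := hgv A hA
    have h2 := hgv B hB
    have h3 := hgv y hy
    have := hS y hy
    exact ⟨by omega, by omega, hgg y hy⟩)
  have he := Finset.card_erase_add_one (Finset.mem_image_of_mem g hA)
  rw [hc] at he
  have hBb := (unitOk_sound d φ hi hd h (g B) (by omega) (hgg B hB)).1
  have hAb := (unitOk_sound d φ hi hd h (g A) (by omega) (hgg A hA)).2
  have h1 := hgv A hA
  have h2 := hgv B hB
  zify at hBb hAb hcard he
  have h3 : (B - A : ℤ) = g B - g A := by linarith
  rw [h3]
  have h4 : (S.card : ℤ) ≤ unitCnt d (g B) - unitCnt d (g A) + 1 := by linarith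
  have h5 := mul_le_mul_of_nonneg_left h4 (by linarith : (0 : ℤ) ≤ d)
  linarith

theorem tabLoop_sound : ∀ N : ℕ, tabLoop N = true → ∀ n, 1 ≤ n → n ≤ N →
    unitOk n (totT n) (discT n) = true := by
  intro N
  induction N with
  | zero => intro _ n h1 h2; omega
  | succ N ih =>
    intro h n h1 h2
    rw [tabLoop, Bool.and_eq_true] at h
    rcases Nat.lt_or_ge N n with h3 | h3
    · have : n = N + 1 := by omega
      subst this; exact h.1
    · exact ih h.2 n h1 h3

theorem greedy_sound (h k : ℕ) (l : ℕ → ℕ)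
    (hl : ∀ n m, 1 ≤ n → n ≤ h → 1 ≤ m → m ≤ h → n * l m + m * l n ≤ 2 * k) :
    ∀ d i ri rj : ℕ, 1 ≤ i → i + d ≤ h →
      ri * l i + rj * l (i + d) + ∑ n ∈ Finset.Ioo i (i + d), aC n * l n
        ≤ 2 * k * greedy d i ri rj := by
  intro d
  induction d with
  | zero =>
    intro i ri rj hi hh
    simp only [Nat.add_zero, Finset.Ioo_self, Finset.sum_empty, greedy]
    have h1 := hl i i hi hh hi hh
    have h2 : ri + rj ≤ 2 * i * ((ri + rj) / (2 * i) + 1) :=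
      (Nat.lt_mul_div_succ _ (by omega)).le
    have h3 := Nat.mul_le_mul_right (l i) h2
    have h4 := Nat.mul_le_mul_right ((ri + rj) / (2 * i) + 1) h1
    nlinarith
  | succ d ih =>
    intro i ri rj hi hh
    have hj : 0 < i + (d + 1) := by omega
    have hp := hl i (i + (d + 1)) hi (by omega) (by omega) hh
    simp only [greedy]
    set j := i + (d + 1) with hjd
    by_cases hc : ri * i ≤ rj * j
    · have hb : Nat.ble (ri * i) (rj * j) = true := by simpa using hc
      rw [hb, cond_true]
      have h1 := ih (i + 1) (bif Nat.beq d 0 then 0 else aC (i + 1)) (rj - ri * i / j) (by omega)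
        (by omega)
      have hsum : ∑ n ∈ Finset.Ioo i j, aC n * l n =
          (bif Nat.beq d 0 then 0 else aC (i + 1)) * l (i + 1) +
            ∑ n ∈ Finset.Ioo (i + 1) (i + 1 + d), aC n * l n := by
        rcases Nat.eq_zero_or_pos d with h0 | h0
        · subst h0
          have : Finset.Ioo i j = ∅ := by ext x; simp [hjd]
          rw [this]; simp
        · have hb0 : Nat.beq d 0 = false := by rw [Bool.eq_false_iff]; simp; omega
          have : Finset.Ioo i j = insert (i + 1) (Finset.Ioo (i + 1) (i + 1 + d)) := by
            ext x; simp [hjd]; omega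
          rw [this, Finset.sum_insert (by simp), hb0, cond_false]
      rw [hsum]
      have e1 : i + 1 + d = j := by omega
      rw [e1] at h1 ⊢
      have h2 : ri ≤ j * (ri / j + 1) := (Nat.lt_mul_div_succ _ hj).le
      have h3 : ri * i / j * j ≤ ri * i := Nat.div_mul_le_self _ _
      have h4 : ri * i / j ≤ rj := Nat.div_le_of_le_mul (by linarith)
      have h5 : ri * l i + ri * i / j * l j ≤ 2 * k * (ri / j + 1) := by
        have h6 : j * (ri * l i + ri * i / j * l j) ≤ j * (2 * k * (ri / j + 1)) := by
          calc j * (ri * l i + ri * i / j * l j)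
              = ri * (j * l i) + (ri * i / j * j) * l j := by ring
            _ ≤ ri * (j * l i) + (ri * i) * l j := by gcongr
            _ = ri * (i * l j + j * l i) := by ring
            _ ≤ (j * (ri / j + 1)) * (2 * k) := by gcongr
            _ = j * (2 * k * (ri / j + 1)) := by ring
        exact Nat.le_of_mul_le_mul_left h6 hj
      have h7 : rj * l j = ri * i / j * l j + (rj - ri * i / j) * l j := by
        rw [← Nat.add_mul]; congr 1; omega
      rw [h7, Nat.mul_add (2 * k)]
      linarith
    · have hb : Nat.ble (ri * i) (rj * j) = false := by
        rw [Bool.eq_false_iff]; simpa using hc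
      push Not at hc
      rw [hb, cond_false]
      have h1 := ih i (ri - rj * j / i) (bif Nat.beq d 0 then 0 else aC (i + d)) (by omega)
        (by omega)
      have hsum : ∑ n ∈ Finset.Ioo i j, aC n * l n =
          (bif Nat.beq d 0 then 0 else aC (i + d)) * l (i + d) +
            ∑ n ∈ Finset.Ioo i (i + d), aC n * l n := by
        rcases Nat.eq_zero_or_pos d with h0 | h0
        · subst h0
          have : Finset.Ioo i j = ∅ := by ext x; simp [hjd]
          rw [this]; simp
        · have hb0 : Nat.beq d 0 = false := by rw [Bool.eq_false_iff]; simp; omega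
          have : Finset.Ioo i j = insert (i + d) (Finset.Ioo i (i + d)) := by
            ext x; simp [hjd]; omega
          rw [this, Finset.sum_insert (by simp), hb0, cond_false]
      rw [hsum]
      have h2 : rj ≤ i * (rj / i + 1) := (Nat.lt_mul_div_succ _ hi).le
      have h3 : rj * j / i * i ≤ rj * j := Nat.div_mul_le_self _ _
      have h4 : rj * j / i ≤ ri := Nat.div_le_of_le_mul (by linarith)
      have h5 : rj * l j + rj * j / i * l i ≤ 2 * k * (rj / i + 1) := by
        have h6 : i * (rj * l j + rj * j / i * l i) ≤ i * (2 * k * (rj / i + 1)) := by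
          calc i * (rj * l j + rj * j / i * l i)
              = rj * (i * l j) + (rj * j / i * i) * l i := by ring
            _ ≤ rj * (i * l j) + (rj * j) * l i := by gcongr
            _ = rj * (i * l j + j * l i) := by ring
            _ ≤ (i * (rj / i + 1)) * (2 * k) := by gcongr
            _ = i * (2 * k * (rj / i + 1)) := by ring
        exact Nat.le_of_mul_le_mul_left h6 hi
      have h7 : ri * l i = rj * j / i * l i + (ri - rj * j / i) * l i := by
        rw [← Nat.add_mul]; congr 1; omega
      rw [h7, Nat.mul_add (2 * k)]
      linarith

theorem runLoop_sound : ∀ f h : ℕ, runLoop f h (∑ n ∈ Finset.Icc 1 h, eC n) = true →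
    ∀ s, h < s → s ≤ h + f → 4 ≤ s → ineqOk s (∑ n ∈ Finset.Icc 1 s, eC n) = true := by
  intro f
  induction f with
  | zero => intro h _ s h1 h2; omega
  | succ f ih =>
    intro h hr s h1 h2 h4
    rw [runLoop, Bool.and_eq_true] at hr
    have hs : ∑ n ∈ Finset.Icc 1 (h + 1), eC n = ∑ n ∈ Finset.Icc 1 h, eC n + eC (h + 1) :=
      Finset.sum_Icc_succ_top (by omega) _
    rw [← hs] at hr
    rcases Nat.lt_or_ge (h + 1) s with h3 | h3
    · exact ih (h + 1) hr.2 s h3 (by omega) h4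
    · have : s = h + 1 := by omega
      subst this
      have h5 := hr.1
      rw [Bool.or_eq_true] at h5
      rcases h5 with h5 | h5
      · rw [Nat.blt_eq] at h5; omega
      · exact h5
theorem partA (h k : ℕ) (hk : 1892 ≤ k) (h4 : 4 ≤ h) (hH : h ≤ 336) (h34 : 3 * h * h ≤ 4 * k)
    (l c : ℕ → ℕ)
    (hl : ∀ n m, 1 ≤ n → n ≤ h → 1 ≤ m → m ≤ h → n * l m + m * l n ≤ 2 * k)
    (hc : ∀ n, 1 ≤ n → n ≤ h → n * c n + shiftX n ≤ totT n * l n + (n + 2 * discT n)) :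
    ∑ n ∈ Finset.Icc 1 h, c n ≤ k + 1 := by
  have hin := runLoop_sound 336 0 run_ok h (by omega) (by omega) h4
  set E := ∑ n ∈ Finset.Icc 1 h, eC n with hE
  simp only [ineqOk, Bool.and_eq_true, Nat.ble_eq, Nat.blt_eq] at hin
  set g := greedy (h - 1) 1 (aC 1) (aC h) with hg
  set km := max 1892 ((3 * h * h + 3) / 4) with hkm
  have hkk : km ≤ k := by
    rw [hkm]; apply max_le hk; omega
  obtain ⟨h1, h2⟩ := hin
  have hg1 : 2 * g ≤ 10 ^ 9 := by
    by_contra hcon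
    push Not at hcon
    have := Nat.mul_le_mul_left km hcon.le
    omega
  have h3 : E + k * (2 * g) < 2 * 10 ^ 9 + k * 10 ^ 9 := by
    obtain ⟨t, rfl⟩ := Nat.exists_eq_add_of_le hkk
    have := Nat.mul_le_mul_left t hg1
    rw [Nat.add_mul, Nat.add_mul]
    omega
  have hs := greedy_sound h k l hl (h - 1) 1 (aC 1) (aC h) le_rfl (by omega)
  have e1 : 1 + (h - 1) = h := by omega
  rw [e1, ← hg] at hs
  have hsum : ∑ n ∈ Finset.Icc 1 h, aC n * l n =
      aC 1 * l 1 + aC h * l h + ∑ n ∈ Finset.Ioo 1 h, aC n * l n := by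
    have : Finset.Icc 1 h = insert 1 (insert h (Finset.Ioo 1 h)) := by
      ext x; simp; omega
    rw [this, Finset.sum_insert (by simp; omega), Finset.sum_insert (by simp)]
    ring
  have hterm : ∀ n ∈ Finset.Icc 1 h, 10 ^ 9 * c n ≤ aC n * l n + eC n := by
    intro n hn
    rw [Finset.mem_Icc] at hn
    have hcn := hc n hn.1 hn.2
    have hn0 : 0 < n := hn.1
    have ha : 10 ^ 9 * totT n ≤ n * aC n := (Nat.lt_mul_div_succ _ hn0).le
    have he : 10 ^ 9 * (n + 2 * discT n - shiftX n) ≤ n * eC n := (Nat.lt_mul_div_succ _ hn0).le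
    have hX : shiftX n ≤ n := by unfold shiftX; split_ifs <;> omega
    have h5 : n * c n ≤ totT n * l n + (n + 2 * discT n - shiftX n) := by omega
    have h6 : n * (10 ^ 9 * c n) ≤ n * (aC n * l n + eC n) := by
      calc n * (10 ^ 9 * c n) = 10 ^ 9 * (n * c n) := by ring
        _ ≤ 10 ^ 9 * (totT n * l n + (n + 2 * discT n - shiftX n)) := by gcongr
        _ = (10 ^ 9 * totT n) * l n + 10 ^ 9 * (n + 2 * discT n - shiftX n) := by ring
        _ ≤ (n * aC n) * l n + n * eC n := by gcongr
        _ = _ := by ring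
    exact Nat.le_of_mul_le_mul_left h6 hn0
  have htot := Finset.sum_le_sum hterm
  rw [← Finset.mul_sum, Finset.sum_add_distrib, hsum, ← hE] at htot
  have h7 : 10 ^ 9 * ∑ n ∈ Finset.Icc 1 h, c n < 10 ^ 9 * (k + 2) := by
    have : 2 * k * g = k * (2 * g) := by ring
    have : 10 ^ 9 * (k + 2) = 2 * 10 ^ 9 + k * 10 ^ 9 := by ring
    omega
  have := Nat.lt_of_mul_lt_mul_left h7
  omega

/-- Circle pairing: the quarter-disc area bound. -/
theorem circle_bound (h k : ℕ) (hh : 1 ≤ h) (M : ℕ → ℝ) (hM0 : M (h + 1) = 0)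
    (hanti : ∀ n, M (n + 1) ≤ M n)
    (hM : ∀ n m, 1 ≤ n → n ≤ h → 1 ≤ m → m ≤ h → n * M m + m * M n ≤ 2 * k) :
    ∑ n ∈ Finset.Icc 1 h, M n ≤ Real.pi / 2 * k := by
  have hpi := Real.pi_pos
  have hhp : (0 : ℝ) < h := by exact_mod_cast hh
  set μ : ℕ → ℝ := fun n => M n - M (n + 1) with hμ
  have hμ0 : ∀ n, 0 ≤ μ n := fun n => sub_nonneg.mpr (hanti n)
  have hMnn : ∀ n, n ≤ h + 1 → 0 ≤ M n := by
    intro n hn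
    have : M (h + 1) ≤ M n := antitone_nat_of_succ_le hanti hn
    linarith
  -- telescoping
  have htel : ∀ a, a ≤ h + 1 → ∑ n ∈ Finset.Ico a (h + 1), μ n = M a := by
    intro a ha
    have := Finset.sum_Ico_sub M ha
    have h2 : ∑ n ∈ Finset.Ico a (h + 1), μ n = - ∑ n ∈ Finset.Ico a (h + 1), (M (n + 1) - M n) := by
      rw [← Finset.sum_neg_distrib]; apply Finset.sum_congr rfl; intros; simp [hμ]
    rw [h2, this, hM0]; ring
  have hsumM : ∑ n ∈ Finset.Icc 1 h, M n = ∑ n ∈ Finset.Icc 1 h, n * μ n := by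
    have : ∀ N : ℕ, ∑ n ∈ Finset.Icc 1 N, (n : ℝ) * μ n =
        ∑ n ∈ Finset.Icc 1 N, M n - N * M (N + 1) := by
      intro N
      induction N with
      | zero => simp
      | succ N ih =>
        rw [Finset.sum_Icc_succ_top (by omega), Finset.sum_Icc_succ_top (by omega), ih]
        simp only [hμ]; push_cast; ring
    rw [this h, hM0]; ring
  set α : ℕ → ℝ := fun n => Real.arcsin (n / h) with hα
  set F : ℝ → ℝ := fun θ => ∑ n ∈ Finset.Icc 1 h,
    μ n * Set.indicator {x : ℝ | x ≤ α n} Real.cos θ with hF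
  have hfi1 : ∀ n, IntervalIntegrable (fun θ => μ n * Set.indicator {x : ℝ | x ≤ α n} Real.cos θ)
      MeasureTheory.volume 0 (Real.pi / 2) := by
    intro n
    apply IntervalIntegrable.const_mul
    have := Real.continuous_cos.intervalIntegrable (μ := MeasureTheory.volume) 0 (Real.pi / 2)
    rw [intervalIntegrable_iff] at this ⊢
    exact this.indicator measurableSet_Iic
  have hFint : IntervalIntegrable F MeasureTheory.volume 0 (Real.pi / 2) := by
    have := IntervalIntegrable.sum (Finset.Icc 1 h) (fun n _ => hfi1 n)
    have h2 : F = ∑ n ∈ Finset.Icc 1 h,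
        fun θ => μ n * Set.indicator {x : ℝ | x ≤ α n} Real.cos θ := by
      funext θ; simp [hF]
    rw [h2]; exact this
  have hIF : ∫ θ in (0 : ℝ)..(Real.pi / 2), F θ = (∑ n ∈ Finset.Icc 1 h, M n) / h := by
    rw [hF, intervalIntegral.integral_finsetSum (fun n _ => hfi1 n), hsumM, Finset.sum_div]
    apply Finset.sum_congr rfl
    intro n hn
    rw [Finset.mem_Icc] at hn
    have hn1 : (n : ℝ) / h ≤ 1 := by
      rw [div_le_one hhp]; exact_mod_cast hn.2
    have hn0 : 0 ≤ (n : ℝ) / h := by positivity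
    rw [intervalIntegral.integral_const_mul, intervalIntegral.integral_indicator, integral_cos]
    · simp only [hα, Real.sin_zero, sub_zero]
      rw [Real.sin_arcsin (by linarith) hn1]; ring
    · exact ⟨Real.arcsin_nonneg.mpr hn0, Real.arcsin_le_pi_div_two _⟩
  have hFle : ∀ θ, 0 ≤ θ → θ ≤ Real.pi / 2 → ∃ a : ℕ, 1 ≤ a ∧ a ≤ h ∧ h * Real.sin θ ≤ a ∧
      F θ ≤ Real.cos θ * M a := by
    intro θ h0 h1
    have hc0 : 0 ≤ Real.cos θ := Real.cos_nonneg_of_mem_Icc ⟨by linarith, h1⟩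
    have hsin1 := Real.sin_le_one θ
    refine ⟨max 1 ⌈h * Real.sin θ⌉₊, le_max_left _ _, ?_, ?_, ?_⟩
    · apply max_le hh
      rw [Nat.ceil_le]; nlinarith
    · push_cast
      exact le_trans (Nat.le_ceil _) (le_max_right _ _)
    · set a := max 1 ⌈h * Real.sin θ⌉₊ with ha
      have hah : a ≤ h := by
        apply max_le hh
        rw [Nat.ceil_le]; nlinarith
      rw [← htel a (by omega), Finset.mul_sum]
      have hsub : Finset.Ico a (h + 1) ⊆ Finset.Icc 1 h := by
        intro x hx
        rw [Finset.mem_Ico] at hx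
        rw [Finset.mem_Icc]
        have : 1 ≤ a := le_max_left _ _
        omega
      rw [hF]
      have hz : ∀ n ∈ Finset.Icc 1 h, n ∉ Finset.Ico a (h + 1) →
          μ n * Set.indicator {x : ℝ | x ≤ α n} Real.cos θ = 0 := by
        intro n hn hn2
        rw [Finset.mem_Icc] at hn
        rw [Finset.mem_Ico] at hn2
        have hna : n < a := by omega
        have hnc : n < ⌈h * Real.sin θ⌉₊ := by
          rcases lt_max_iff.mp hna with h' | h'
          · omega
          · exact h'
        rw [Nat.lt_ceil] at hnc
        have hnot : θ ∉ {x : ℝ | x ≤ α n} := by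
          intro hmem
          have hmem' : θ ≤ Real.arcsin (n / h) := hmem
          have hn1 : (n : ℝ) / h ≤ 1 := by
            rw [div_le_one hhp]; exact_mod_cast hn.2
          have hn0 : 0 ≤ (n : ℝ) / h := by positivity
          rw [Real.le_arcsin_iff_sin_le ⟨by linarith, h1⟩ ⟨by linarith, hn1⟩, le_div_iff₀ hhp] at hmem'
          linarith
        rw [Set.indicator_of_notMem hnot, mul_zero]
      have := Finset.sum_subset hsub hz
      simp only
      rw [← this]
      apply Finset.sum_le_sum
      intro n _
      rw [mul_comm]
      apply mul_le_mul_of_nonneg_right _ (hμ0 n)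
      apply Set.indicator_le_self' (fun _ _ => hc0)
  have hpt : ∀ θ ∈ Set.Icc (0 : ℝ) (Real.pi / 2), F θ + F (Real.pi / 2 - θ) ≤ 2 * k / h := by
    intro θ hθ
    obtain ⟨a, ha1, hah, has, haF⟩ := hFle θ hθ.1 hθ.2
    obtain ⟨b, hb1, hbh, hbs, hbF⟩ := hFle (Real.pi / 2 - θ) (by linarith [hθ.2]) (by linarith [hθ.1])
    rw [Real.sin_pi_div_two_sub] at hbs
    rw [Real.cos_pi_div_two_sub] at hbF
    have h1 := hM a b ha1 hah hb1 hbh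
    rw [le_div_iff₀ hhp]
    have h2 := hMnn a (by omega)
    have h3 := hMnn b (by omega)
    nlinarith [mul_le_mul_of_nonneg_right has h3, mul_le_mul_of_nonneg_right hbs h2]
  have hFint2 : IntervalIntegrable (fun θ => F (Real.pi / 2 - θ)) MeasureTheory.volume 0
      (Real.pi / 2) := by
    have := (hFint.comp_sub_left (Real.pi / 2)).symm
    simpa using this
  have hI2 : ∫ θ in (0 : ℝ)..(Real.pi / 2), F (Real.pi / 2 - θ) =
      ∫ θ in (0 : ℝ)..(Real.pi / 2), F θ := by
    rw [intervalIntegral.integral_comp_sub_left]; simp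
  have hmono := intervalIntegral.integral_mono_on (by linarith : (0 : ℝ) ≤ Real.pi / 2)
    (hFint.add hFint2) (intervalIntegrable_const (c := 2 * (k : ℝ) / h)) hpt
  rw [intervalIntegral.integral_add hFint hFint2, hI2, hIF, intervalIntegral.integral_const] at hmono
  rw [smul_eq_mul, sub_zero, ← add_div, mul_div_assoc', div_le_div_iff_of_pos_right hhp] at hmono
  linarith
/-- Scaled periodic density `210 · φ(d)/d` with `d = gcd(n, 210)`. -/
def rS (n : ℕ) : ℕ := 210 / Nat.gcd n 210 * totT (Nat.gcd n 210)

theorem rS_period (n : ℕ) : rS (210 + n) = rS n := by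
  simp [rS]

theorem rS_sum_base : ∀ j < 210, 35 * ∑ i ∈ Finset.range j, rS (i + 1) ≤ 4608 * j + 3406 := by
  decide +kernel

theorem rS_sum_period : 35 * ∑ i ∈ Finset.range 210, rS (i + 1) = 4608 * 210 := by
  decide +kernel

theorem err_base : ∀ n < 210, 35 * (Nat.gcd n 210 + 2 * discT (Nat.gcd n 210)) ≤
    106 * Nat.gcd n 210 + 35 * shiftX (Nat.gcd n 210) := by
  decide +kernel

theorem rS_sum (j : ℕ) : 35 * ∑ i ∈ Finset.range j, rS (i + 1) ≤ 4608 * j + 3406 := by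
  induction j using Nat.strong_induction_on with
  | _ j ih =>
    rcases Nat.lt_or_ge j 210 with h | h
    · exact rS_sum_base j h
    · obtain ⟨m, rfl⟩ := Nat.exists_eq_add_of_le h
      have h1 := ih m (by omega)
      rw [Finset.sum_range_add, Nat.mul_add, rS_sum_period]
      have : ∀ i, rS (210 + i + 1) = rS (i + 1) := fun i => by
        rw [Nat.add_assoc, rS_period]
      simp only [this]
      omega

theorem abel_bound (d M : ℕ → ℝ) (δ : ℝ) (hM : ∀ n, M (n + 1) ≤ M n) (hM0 : ∀ n, 0 ≤ M n)
    (hd : ∀ j, ∑ i ∈ Finset.range j, d i ≤ δ) (N : ℕ) :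
    ∑ i ∈ Finset.range (N + 1), d i * M i ≤ δ * M 0 := by
  have key : ∀ N, ∑ i ∈ Finset.range (N + 1), d i * M i ≤
      δ * (M 0 - M N) + (∑ i ∈ Finset.range (N + 1), d i) * M N := by
    intro N
    induction N with
    | zero => simp
    | succ N ih =>
      rw [Finset.sum_range_succ, Finset.sum_range_succ (fun i => d i)]
      have h1 := hd (N + 1)
      have h2 := hM N
      nlinarith [mul_nonneg (sub_nonneg.mpr h1) (sub_nonneg.mpr h2)]
  have h1 := key N
  have h2 := mul_le_mul_of_nonneg_right (hd (N + 1)) (hM0 N)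
  linarith

theorem partB (h k : ℕ) (hH : 336 < h) (h34 : 3 * h * h ≤ 4 * k) (l c : ℕ → ℕ)
    (hl : ∀ n m, 1 ≤ n → n ≤ h → 1 ≤ m → m ≤ h → n * l m + m * l n ≤ 2 * k)
    (hc : ∀ n, 1 ≤ n → n ≤ h → Nat.gcd n 210 * c n + shiftX (Nat.gcd n 210) ≤
      totT (Nat.gcd n 210) * l n + (Nat.gcd n 210 + 2 * discT (Nat.gcd n 210))) :
    ∑ n ∈ Finset.Icc 1 h, c n ≤ k + 1 := by
  set M : ℕ → ℕ := fun n => (Finset.Icc n h).sup l with hMdef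
  have hMl : ∀ n, n ≤ h → l n ≤ M n := fun n hn =>
    Finset.le_sup (f := l) (Finset.mem_Icc.mpr ⟨le_rfl, hn⟩)
  have hManti : ∀ n, M (n + 1) ≤ M n := fun n =>
    Finset.sup_mono (Finset.Icc_subset_Icc (by omega) le_rfl)
  have hMtop : M (h + 1) = 0 := by simp [hMdef]
  have hMex : ∀ n, n ≤ h → ∃ n', n ≤ n' ∧ n' ≤ h ∧ M n = l n' := by
    intro n hn
    obtain ⟨x, hx, hx2⟩ := Finset.exists_mem_eq_sup (Finset.Icc n h)
      ⟨n, Finset.mem_Icc.mpr ⟨le_rfl, hn⟩⟩ l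
    rw [Finset.mem_Icc] at hx
    exact ⟨x, hx.1, hx.2, hx2⟩
  have hMM : ∀ n m, 1 ≤ n → n ≤ h → 1 ≤ m → m ≤ h → n * M m + m * M n ≤ 2 * k := by
    intro n m hn1 hn hm1 hm
    obtain ⟨n', h1, h2, h3⟩ := hMex n hn
    obtain ⟨m', h4, h5, h6⟩ := hMex m hm
    rw [h3, h6]
    have := hl n' m' (by omega) h2 (by omega) h5
    nlinarith [Nat.mul_le_mul_right (l m') h1, Nat.mul_le_mul_right (l n') h4]
  have hcirc := circle_bound h k (by omega) (fun n => (M n : ℝ)) (by simp [hMtop])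
    (fun n => by exact_mod_cast hManti n)
    (fun n m h1 h2 h3 h4 => by exact_mod_cast hMM n m h1 h2 h3 h4)
  have habel := abel_bound (fun i => 35 * (rS (i + 1) : ℝ) - 4608) (fun i => (M (i + 1) : ℝ)) 3406
    (fun n => by exact_mod_cast hManti (n + 1)) (fun n => by positivity)
    (fun j => by
      have h1 : ((35 * ∑ i ∈ Finset.range j, rS (i + 1) : ℕ) : ℝ) ≤ ((4608 * j + 3406 : ℕ) : ℝ) := by
        exact_mod_cast rS_sum j
      push_cast at h1
      rw [Finset.sum_sub_distrib, ← Finset.mul_sum, Finset.sum_const, Finset.card_range,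
        nsmul_eq_mul]
      linarith) (h - 1)
  rw [show h - 1 + 1 = h by omega] at habel
  have hshift : ∀ f : ℕ → ℝ, ∑ n ∈ Finset.Icc 1 h, f n = ∑ i ∈ Finset.range h, f (i + 1) := by
    intro f
    rw [Finset.range_eq_Ico, Finset.sum_Ico_add' f 0 h 1]
    rfl
  have hterm : ∀ n ∈ Finset.Icc 1 h, (c n : ℝ) ≤ (rS n : ℝ) * M n / 210 + 106 / 35 := by
    intro n hn
    rw [Finset.mem_Icc] at hn
    have hcn := hc n hn.1 hn.2
    have herr : 35 * (Nat.gcd n 210 + 2 * discT (Nat.gcd n 210)) ≤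
        106 * Nat.gcd n 210 + 35 * shiftX (Nat.gcd n 210) := by
      have := err_base (n % 210) (Nat.mod_lt _ (by norm_num))
      have hmod : Nat.gcd (n % 210) 210 = Nat.gcd n 210 := by
        rw [Nat.gcd_comm n 210]; exact (Nat.gcd_rec 210 n).symm
      rwa [hmod] at this
    have hg : 0 < Nat.gcd n 210 := Nat.gcd_pos_of_pos_left _ hn.1
    obtain ⟨t, ht⟩ := Nat.gcd_dvd_right n 210
    have hr : rS n = t * totT (Nat.gcd n 210) := by
      unfold rS
      congr 1
      exact Nat.div_eq_of_eq_mul_right hg ht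
    rw [hr]
    set d := Nat.gcd n 210 with hd
    have h1 : 35 * (d * c n) ≤ 35 * (totT d * M n) + 106 * d := by
      have := Nat.mul_le_mul_left (totT d) (hMl n hn.2)
      omega
    have h1' : (35 : ℝ) * (d * c n) ≤ 35 * (totT d * M n) + 106 * d := by exact_mod_cast h1
    have ht' : (210 : ℝ) = d * t := by exact_mod_cast ht
    have hd0 : (0 : ℝ) < d := by exact_mod_cast hg
    rw [ht']
    have ht0 : (t : ℝ) ≠ 0 := by
      intro h0; rw [h0] at ht'; norm_num at ht'
    have e1 : ((t * totT d : ℕ) : ℝ) * M n / (d * t) = totT d * M n / d := by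
      push_cast; field_simp
    rw [e1, div_add_div _ _ hd0.ne' (by norm_num), le_div_iff₀ (by positivity)]
    linarith
  have hsum := Finset.sum_le_sum hterm
  rw [Finset.sum_add_distrib, Finset.sum_const, Nat.card_Icc, nsmul_eq_mul, ← Finset.sum_div,
    Nat.add_sub_cancel, hshift (fun n => (rS n : ℝ) * M n)] at hsum
  rw [hshift (fun n => (M n : ℝ))] at hcirc
  simp only [sub_mul, Finset.sum_sub_distrib, mul_assoc, ← Finset.mul_sum] at habel
  simp only [zero_add] at habel
  set X := ∑ i ∈ Finset.range h, (rS (i + 1) : ℝ) * M (i + 1)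
  set Y := ∑ i ∈ Finset.range h, (M (i + 1) : ℝ)
  have hpi := Real.pi_lt_d4
  have hM1 : (h : ℝ) * M 1 ≤ 2 * k := by
    have := hMM 1 h le_rfl (by omega) (by omega) le_rfl
    have h2 : h * M 1 ≤ 2 * k := by omega
    exact_mod_cast h2
  have hh : (337 : ℝ) ≤ h := by exact_mod_cast hH
  have hM1' : (337 : ℝ) * M 1 ≤ 2 * k :=
    le_trans (mul_le_mul_of_nonneg_right hh (by positivity)) hM1
  have h34' : (3 : ℝ) * h * h ≤ 4 * k := by exact_mod_cast h34
  have hhk : (1011 : ℝ) * h ≤ 4 * k := by nlinarith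
  have hk0 : (0 : ℝ) ≤ k := by positivity
  have hY : Y ≤ 1.5708 * k := by
    refine le_trans hcirc (mul_le_mul_of_nonneg_right ?_ hk0)
    linarith
  have hfin : (∑ n ∈ Finset.Icc 1 h, (c n : ℝ)) ≤ k := by
    linarith
  have : ∑ n ∈ Finset.Icc 1 h, c n ≤ k := by exact_mod_cast hfin
  omega
theorem height_bound (k h : ℕ) (hh : 1 ≤ h) (Q : Set (ℤ × ℤ))
    (hdet : ∀ p ∈ Q, ∀ q ∈ Q, |p.1 * q.2 - q.1 * p.2| ≤ (k : ℤ))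
    (hle : ∀ p ∈ Q, |p.2| ≤ (h : ℤ)) (h1 : ∃ p ∈ Q, p.2 = (h : ℤ))
    (h2 : ∀ j : ℤ, ∃ p ∈ Q, (h : ℤ) ≤ |p.1 - j * p.2|) : 3 * h * h ≤ 4 * k := by
  obtain ⟨p, hp, hph⟩ := h1
  have hhz : (1 : ℤ) ≤ h := by exact_mod_cast hh
  set H : ℤ := (h : ℤ) with hH
  set j := p.1 / H with hj
  set m := p.1 % H with hm
  have hm0 : 0 ≤ m := Int.emod_nonneg _ (by omega)
  have hmH : m < H := Int.emod_lt_of_pos _ (by omega)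
  have hpm : p.1 = H * j + m := (Int.mul_ediv_add_emod p.1 H).symm
  by_contra hcon
  push Not at hcon
  have hcon' : 4 * (k : ℤ) < 3 * H * H := by rw [hH]; exact_mod_cast hcon
  -- points with large value of the two functionals, after a choice of sign
  have hsgn : ∀ i : ℤ, ∃ a b : ℤ, H ≤ a - i * b ∧ |b| ≤ H ∧
      (∃ q ∈ Q, (a = q.1 ∧ b = q.2) ∨ (a = -q.1 ∧ b = -q.2)) := by
    intro i
    obtain ⟨q, hq, hqi⟩ := h2 i
    rcases le_total 0 (q.1 - i * q.2) with hs | hs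
    · rw [abs_of_nonneg hs] at hqi
      exact ⟨q.1, q.2, hqi, hle q hq, q, hq, Or.inl ⟨rfl, rfl⟩⟩
    · rw [abs_of_nonpos hs] at hqi
      exact ⟨-q.1, -q.2, by linarith, by rw [abs_neg]; exact hle q hq, q, hq, Or.inr ⟨rfl, rfl⟩⟩
  obtain ⟨a, b, hab, hbH, q, hq, hqe⟩ := hsgn j
  obtain ⟨a', b', hab', hbH', q', hq', hqe'⟩ := hsgn (j + 1)
  have d1 : a * H - p.1 * b ≤ k := by
    have := abs_le.mp (hdet q hq p hp)
    rw [hph] at this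
    rcases hqe with ⟨rfl, rfl⟩ | ⟨rfl, rfl⟩ <;> linarith [this.1, this.2]
  have d2 : a' * H - p.1 * b' ≤ k := by
    have := abs_le.mp (hdet q' hq' p hp)
    rw [hph] at this
    rcases hqe' with ⟨rfl, rfl⟩ | ⟨rfl, rfl⟩ <;> linarith [this.1, this.2]
  have d3 : a' * b - a * b' ≤ k := by
    have := abs_le.mp (hdet q' hq' q hq)
    rcases hqe with ⟨rfl, rfl⟩ | ⟨rfl, rfl⟩ <;> rcases hqe' with ⟨rfl, rfl⟩ | ⟨rfl, rfl⟩ <;>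
      linarith [this.1, this.2]
  obtain ⟨x, hx⟩ : ∃ x, x = a - j * b := ⟨_, rfl⟩
  obtain ⟨y, hy⟩ : ∃ y, y = a' - (j + 1) * b' := ⟨_, rfl⟩
  obtain ⟨c, hc⟩ : ∃ c, c = -b' := ⟨_, rfl⟩
  have ha : a = x + j * b := by linarith
  have hb' : b' = -c := by linarith
  have ha' : a' = y - (j + 1) * c := by rw [hy, hb']; ring
  rw [← hx] at hab
  rw [← hy] at hab'
  have hb2 := (abs_le.mp hbH).2
  have hc2 : c ≤ H := by have := (abs_le.mp hbH').1; linarith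
  rw [hpm, ha] at d1
  rw [hpm, ha', hb'] at d2
  rw [ha, ha', hb'] at d3
  have e1 : x * H - m * b ≤ k := by linarith
  have e2 : y * H - (H - m) * c ≤ k := by linarith
  have e3 : y * b - c * b + x * c ≤ k := by linarith
  clear d1 d2 d3
  have hH0 : 0 ≤ H := by linarith
  have f1 : H * H < 4 * (m * b) := by
    have := mul_le_mul_of_nonneg_right hab hH0
    linarith
  have f2 : H * H < 4 * ((H - m) * c) := by
    have := mul_le_mul_of_nonneg_right hab' hH0
    linarith
  have hHH : 0 < H * H := by positivity
  have hb0 : 0 < b := by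
    by_contra hb
    push Not at hb
    have := mul_nonpos_of_nonneg_of_nonpos hm0 hb
    linarith
  have hc0 : 0 < c := by
    by_contra hb
    push Not at hb
    have := mul_nonpos_of_nonneg_of_nonpos (sub_nonneg.mpr hmH.le) hb
    linarith
  have f3 : H * H < 4 * ((H - b) * (H - c)) := by
    have u1 := mul_le_mul_of_nonneg_right hab' hb0.le
    have u2 := mul_le_mul_of_nonneg_right hab hc0.le
    linarith
  -- contradiction
  have g1 : H * H < 4 * (b * c) := by
    have t1 : 4 * (m * (H - m)) ≤ H * H := by nlinarith [sq_nonneg (H - 2 * m)]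
    have t2 : (H * H) * (H * H) < (4 * (m * b)) * (4 * ((H - m) * c)) :=
      mul_lt_mul f1 f2.le hHH (by linarith)
    have t3 : (4 * (m * b)) * (4 * ((H - m) * c)) ≤ (H * H) * (4 * (b * c)) := by
      have := mul_le_mul_of_nonneg_right t1 (by positivity : 0 ≤ 4 * (b * c))
      linarith
    exact lt_of_mul_lt_mul_left (lt_of_lt_of_le t2 t3) hHH.le
  have g0 := sq_nonneg (b - c)
  have g2 : 4 * (b * c) ≤ (b + c) * (b + c) := by linarith
  have g3 : 4 * ((H - b) * (H - c)) ≤ (2 * H - (b + c)) * (2 * H - (b + c)) := by linarith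
  have g4 : H < b + c := by
    by_contra hb
    push Not at hb
    have := mul_self_le_mul_self (by linarith : 0 ≤ b + c) hb
    linarith
  have g5 : H < 2 * H - (b + c) := by
    by_contra hb
    push Not at hb
    have := mul_self_le_mul_self (by linarith : 0 ≤ 2 * H - (b + c)) hb
    linarith
  linarith

/-- Main counting theorem for reduced sets of height at least four. -/
theorem reduced_count (k h : ℕ) (hk : 1892 ≤ k) (h4 : 4 ≤ h) (Q : Finset (ℤ × ℤ))
    (hgcd : ∀ p ∈ Q, Int.gcd p.1 p.2 = 1) (hneg : ∀ p ∈ Q, -p ∉ Q)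
    (hdet : ∀ p ∈ Q, ∀ q ∈ Q, |p.1 * q.2 - q.1 * p.2| ≤ (k : ℤ))
    (hpos : ∀ p ∈ Q, 0 ≤ p.2)
    (hle : ∀ p ∈ Q, |p.2| ≤ (h : ℤ)) (h1 : ∃ p ∈ Q, p.2 = (h : ℤ))
    (h2 : ∀ j : ℤ, ∃ p ∈ Q, (h : ℤ) ≤ |p.1 - j * p.2|) : Q.card ≤ k + 2 := by
  classical
  have h34 : 3 * h * h ≤ 4 * k := height_bound k h (by omega) (↑Q)
    (by simpa using hdet) (by simpa using hle) (by simpa using h1) (by simpa using h2)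
  set L : ℕ → Finset ℤ := fun n => (Q.filter (fun p => p.2.toNat = n)).image Prod.fst with hL
  have hLmem : ∀ n m, m ∈ L n ↔ (m, (n : ℤ)) ∈ Q := by
    intro n m
    simp only [hL, Finset.mem_image, Finset.mem_filter]
    constructor
    · rintro ⟨⟨x, y⟩, ⟨hp, hy⟩, rfl⟩
      have := hpos _ hp
      simp only at this hy ⊢
      have : (n : ℤ) = y := by omega
      rw [this]; exact hp
    · intro hm
      exact ⟨_, ⟨hm, by simp⟩, rfl⟩
  have hLcard : ∀ n, (Q.filter (fun p => p.2.toNat = n)).card = (L n).card := by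
    intro n
    rw [hL, Finset.card_image_of_injOn]
    rintro ⟨x, y⟩ hx ⟨x', y'⟩ hx' hxx
    simp only [Finset.coe_filter, Set.mem_ofPred_eq] at hx hx' hxx
    have := hpos _ hx.1
    have := hpos _ hx'.1
    simp only at *
    ext
    · exact hxx
    · simp only; omega
  have hQcard : Q.card = ∑ n ∈ Finset.range (h + 1), (L n).card := by
    rw [Finset.card_eq_sum_card_fiberwise (f := fun p : ℤ × ℤ => p.2.toNat)
      (t := Finset.range (h + 1))]
    · exact Finset.sum_congr rfl fun n _ => hLcard n
    · intro p hp
      have := (abs_le.mp (hle p hp)).2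
      simp only [Finset.coe_range, Set.mem_Iio]
      omega
  have hL0 : (L 0).card ≤ 1 := by
    rw [Finset.card_le_one]
    intro x hx y hy
    rw [hLmem] at hx hy
    have gx := hgcd _ hx
    have gy := hgcd _ hy
    simp only [Nat.cast_zero, Int.gcd_zero_right] at gx gy
    have hn := hneg _ hx
    by_contra hne
    apply hn
    have : -((x : ℤ), ((0 : ℕ) : ℤ)) = (y, ((0 : ℕ) : ℤ)) := by
      ext
      · simp only [Prod.fst_neg]; omega
      · simp
    rw [this]; exact hy
  -- the minimum and maximum of each level
  have hAB : ∀ n, ∃ A B : ℤ, (L n).Nonempty → A ∈ L n ∧ B ∈ L n ∧ ∀ x ∈ L n, A ≤ x ∧ x ≤ B := by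
    intro n
    by_cases hne : (L n).Nonempty
    · exact ⟨(L n).min' hne, (L n).max' hne, fun _ => ⟨Finset.min'_mem _ _, Finset.max'_mem _ _,
        fun x hx => ⟨Finset.min'_le _ _ hx, Finset.le_max' _ _ hx⟩⟩⟩
    · exact ⟨0, 0, fun h => absurd h hne⟩
  choose A B hABs using hAB
  set l : ℕ → ℕ := fun n => if (L n).Nonempty then (B n - A n).toNat else 0 with hl
  have hlne : ∀ n, (L n).Nonempty → ((l n : ℕ) : ℤ) = B n - A n := by
    intro n hne
    obtain ⟨hA, hB, hx⟩ := hABs n hne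
    simp only [hl, hne, if_true]
    rw [Int.toNat_of_nonneg]
    linarith [(hx _ hB).1]
  have hle0 : ∀ n, ¬ (L n).Nonempty → l n = 0 := fun n hne => by simp [hl, hne]
  have hpair : ∀ n m, (L n).Nonempty → (L m).Nonempty → n * l m + m * l n ≤ 2 * k := by
    intro n m hn hm
    obtain ⟨hA, hB, -⟩ := hABs n hn
    obtain ⟨hA', hB', -⟩ := hABs m hm
    rw [hLmem] at hA hB hA' hB'
    have e1 := (abs_le.mp (hdet _ hB _ hA')).2
    have e2 := (abs_le.mp (hdet _ hB' _ hA)).2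
    simp only at e1 e2
    zify
    rw [hlne n hn, hlne m hm]
    linarith
  have htop : (L h).Nonempty := by
    obtain ⟨⟨x, y⟩, hp, hph⟩ := h1
    simp only at hph
    subst hph
    exact ⟨x, (hLmem h x).mpr hp⟩
  have hone : ∀ n m, n ≤ h → (L m).Nonempty → n * l m ≤ 2 * k := by
    intro n m hn hm
    have := hpair h m htop hm
    have := Nat.mul_le_mul_right (l m) hn
    omega
  have hall : ∀ n m, 1 ≤ n → n ≤ h → 1 ≤ m → m ≤ h → n * l m + m * l n ≤ 2 * k := by
    intro n m _ hn _ hm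
    by_cases hne : (L n).Nonempty <;> by_cases hme : (L m).Nonempty
    · exact hpair n m hne hme
    · rw [hle0 m hme]; simpa using hone m n hm hne
    · rw [hle0 n hne]; simpa using hone n m hn hme
    · rw [hle0 n hne, hle0 m hme]; simp
  have hshift : ∀ d, shiftX d ≤ d := fun d => by unfold shiftX; split_ifs <;> omega
  have hcount : ∀ n d, 1 ≤ d → d ≤ 336 → d ∣ n →
      d * (L n).card + shiftX d ≤ totT d * l n + (d + 2 * discT d) := by
    intro n d hd1 hd2 hdn
    by_cases hne : (L n).Nonempty
    · obtain ⟨hA, hB, hx⟩ := hABs n hne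
      have := count_le d (totT d) (discT d) hd1 (tabLoop_sound 336 tab_ok d hd1 hd2) (L n) (A n)
        (B n) hA hB (fun x hxm => ⟨(hx x hxm).1, (hx x hxm).2, by
          have hg := hgcd _ ((hLmem n x).mp hxm)
          simp only at hg
          have hdz : (d : ℤ) ∣ (n : ℤ) := by exact_mod_cast hdn
          exact Nat.eq_one_of_dvd_one (hg ▸ Int.gcd_dvd_gcd_of_dvd_right _ hdz)⟩)
      rw [← hlne n hne] at this
      exact_mod_cast this
    · rw [Finset.not_nonempty_iff_eq_empty] at hne
      rw [hne]
      have := hshift d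
      simp only [Finset.card_empty, Nat.mul_zero]
      omega
  have hmain : ∑ n ∈ Finset.Icc 1 h, (L n).card ≤ k + 1 := by
    rcases Nat.lt_or_ge 336 h with hH | hH
    · refine partB h k hH h34 l (fun n => (L n).card) hall (fun n hn1 hn => ?_)
      exact hcount n _ (Nat.gcd_pos_of_pos_left _ hn1)
        (le_trans (Nat.gcd_le_right _ (by norm_num)) (by norm_num)) (Nat.gcd_dvd_left _ _)
    · exact partA h k hk h4 hH h34 l (fun n => (L n).card) hall
        (fun n hn1 hn => hcount n n hn1 (by omega) (dvd_refl _))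
  rw [hQcard, Finset.sum_range_succ', add_comm]
  have : ∑ i ∈ Finset.range h, (L (i + 1)).card = ∑ n ∈ Finset.Icc 1 h, (L n).card := by
    rw [Finset.range_eq_Ico, Finset.sum_Ico_add' (fun n => (L n).card) 0 h 1]
    rfl
  rw [this]
  omega

theorem parallel_eq (p q : ℤ × ℤ) (hp : Int.gcd p.1 p.2 = 1) (hq : Int.gcd q.1 q.2 = 1)
    (hd : p.1 * q.2 - q.1 * p.2 = 0) : q = p ∨ q = -p := by
  obtain ⟨a, b⟩ := p
  obtain ⟨c, d⟩ := q
  simp only at hp hq hd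
  have hpc : IsCoprime a b := Int.isCoprime_iff_gcd_eq_one.mpr hp
  have hqc : IsCoprime c d := Int.isCoprime_iff_gcd_eq_one.mpr hq
  have hac : a ∣ c := by
    apply hpc.dvd_of_dvd_mul_right
    exact ⟨d, by linarith⟩
  have hca : c ∣ a := by
    apply hqc.dvd_of_dvd_mul_right
    exact ⟨b, by linarith⟩
  have hbd : b ∣ d := by
    apply hpc.symm.dvd_of_dvd_mul_left
    exact ⟨c, by linarith⟩
  have hdb : d ∣ b := by
    apply hqc.symm.dvd_of_dvd_mul_left
    exact ⟨a, by linarith⟩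
  have e1 := Int.natAbs_eq_natAbs_iff.mp (Int.natAbs_eq_of_dvd_dvd hac hca)
  have e2 := Int.natAbs_eq_natAbs_iff.mp (Int.natAbs_eq_of_dvd_dvd hbd hdb)
  simp only [Prod.neg_mk, Prod.mk.injEq]
  rcases e1 with rfl | rfl
  · rcases e2 with rfl | rfl
    · left; simp
    · have : a * d = 0 := by linarith
      rcases mul_eq_zero.mp this with rfl | rfl
      · right; simp
      · left; simp
  · rcases e2 with rfl | rfl
    · have : c * b = 0 := by linarith
      rcases mul_eq_zero.mp this with rfl | rfl
      · left; simp
      · right; simp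
    · right; simp

theorem nice_finite (k : ℕ) (Q : Set (ℤ × ℤ)) (hQ : IsKNice k Q) :
    Q.Finite ∧ Q.ncard ≤ (k + 1) * (k + 1) := by
  obtain ⟨hc, hn, hd⟩ := hQ
  have hinj : Set.InjOn (fun p : ℤ × ℤ => ((p.1 : ZMod (k + 1)), (p.2 : ZMod (k + 1)))) Q := by
    intro p hp q hq hpq
    simp only [Prod.mk.injEq] at hpq
    have hz : ((p.1 * q.2 - q.1 * p.2 : ℤ) : ZMod (k + 1)) = 0 := by
      push_cast
      rw [hpq.1, hpq.2]; ring
    rw [ZMod.intCast_zmod_eq_zero_iff_dvd] at hz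
    have h0 : p.1 * q.2 - q.1 * p.2 = 0 := by
      apply Int.eq_zero_of_abs_lt_dvd hz
      have := hd p hp q hq
      push_cast
      linarith
    rcases parallel_eq p q (hc p hp).2 (hc q hq).2 h0 with h | h
    · exact h.symm
    · exact absurd (h ▸ hq) (hn p hp)
  have hfin : Q.Finite := Set.Finite.of_injOn (Set.mapsTo_univ _ _) hinj Set.finite_univ
  refine ⟨hfin, ?_⟩
  have := Set.ncard_le_ncard_of_injOn (t := Set.univ) _ (fun a _ => Set.mem_univ _) hinj
    Set.finite_univ
  rw [Set.ncard_univ, Nat.card_prod, Nat.card_zmod] at this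
  exact this

theorem nice_normalize (k t : ℕ) (Q : Set (ℤ × ℤ)) (hQ : IsKNice k Q) (ht : HeightLe Q t) :
    ∃ Q' : Set (ℤ × ℤ), IsKNice k Q' ∧ Q'.ncard = Q.ncard ∧ YNonneg Q' ∧ HeightLe Q' t := by
  obtain ⟨hc, hn, hd⟩ := hQ
  set f : ℤ × ℤ → ℤ × ℤ := fun p => if p.2 < 0 then -p else p with hf
  have hfp : ∀ p, f p = p ∨ f p = -p := by
    intro p
    simp only [hf]
    split_ifs
    · right; rfl
    · left; rfl
  have key : ∀ p ∈ Q, ∀ q ∈ Q, (f p = f q ∨ f p = - f q) → p = q := by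
    intro p hp q hq h
    have : p = q ∨ p = -q := by
      rcases hfp p with h1 | h1 <;> rcases hfp q with h2 | h2 <;> rw [h1, h2] at h <;>
        simpa [neg_eq_iff_eq_neg, or_comm] using h
    rcases this with h | h
    · exact h
    · exact absurd (h ▸ hp) (hn q hq)
  refine ⟨Set.image f Q, ⟨?_, ?_, ?_⟩, ?_, ?_, ?_⟩
  · rintro _ ⟨p, hp, rfl⟩
    rcases hfp p with h1 | h1 <;> rw [h1]
    · exact hc p hp
    · refine ⟨?_, by simpa using (hc p hp).2⟩
      intro h
      apply (hc p hp).1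
      rw [neg_eq_iff_eq_neg] at h
      rw [h]; simp
  · rintro _ ⟨p, hp, rfl⟩ ⟨q, hq, hqp⟩
    have := key q hq p hp (Or.inr hqp)
    subst this
    have h0 : f q = 0 := self_eq_neg.mp hqp
    rcases hfp q with h1 | h1 <;> rw [h1] at h0
    · exact (hc q hq).1 h0
    · exact (hc q hq).1 (neg_eq_zero.mp h0)
  · rintro _ ⟨p, hp, rfl⟩ _ ⟨q, hq, rfl⟩
    have := hd p hp q hq
    rw [abs_le] at this ⊢
    rcases hfp p with h1 | h1 <;> rcases hfp q with h2 | h2 <;> rw [h1, h2] <;>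
      (try simp only [Prod.fst_neg, Prod.snd_neg]) <;> constructor <;> linarith [this.1, this.2]
  · exact Set.InjOn.ncard_image fun p hp q hq h => key p hp q hq (Or.inl h)
  · rintro _ ⟨p, hp, rfl⟩
    simp only [hf]
    split_ifs with h
    · simp only [Prod.snd_neg]; omega
    · omega
  · rintro _ ⟨p, hp, rfl⟩
    rcases hfp p with h1 | h1 <;> rw [h1]
    · exact ht p hp
    · simpa using ht p hp

theorem nice_shear (k : ℕ) (j : ℤ) (Q : Set (ℤ × ℤ)) (hQ : IsKNice k Q) :
    IsKNice k (Set.image (fun p : ℤ × ℤ => (-p.2, p.1 - j * p.2)) Q) ∧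
      (Set.image (fun p : ℤ × ℤ => (-p.2, p.1 - j * p.2)) Q).ncard = Q.ncard := by
  obtain ⟨hc, hn, hd⟩ := hQ
  have hinj : Function.Injective (fun p : ℤ × ℤ => (-p.2, p.1 - j * p.2)) := by
    rintro ⟨a, b⟩ ⟨c, d⟩ h
    simp only [Prod.mk.injEq, neg_inj] at h
    obtain ⟨rfl, h⟩ := h
    simpa using h
  refine ⟨⟨?_, ?_, ?_⟩, Set.ncard_image_of_injective _ hinj⟩
  · rintro _ ⟨p, hp, rfl⟩
    obtain ⟨h0, hg⟩ := hc p hp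
    have hg' : Int.gcd (-p.2) (p.1 - j * p.2) = 1 := by
      rw [← Int.isCoprime_iff_gcd_eq_one] at hg ⊢
      obtain ⟨u, v, huv⟩ := hg
      exact ⟨-(v + u * j), u, by linarith⟩
    refine ⟨?_, hg'⟩
    intro h
    simp only [Prod.mk.injEq] at h
    rw [h.1, h.2] at hg'
    simp at hg'
  · rintro _ ⟨p, hp, rfl⟩ ⟨q, hq, hqp⟩
    apply hn p hp
    have : q = -p := by
      apply hinj
      simp only at hqp ⊢
      rw [hqp]
      ext
      · simp
      · simp; ring
    exact this ▸ hq
  · rintro _ ⟨p, hp, rfl⟩ _ ⟨q, hq, rfl⟩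
    have := hd p hp q hq
    have e : (-p.2) * (q.1 - j * q.2) - (-q.2) * (p.1 - j * p.2) = p.1 * q.2 - q.1 * p.2 := by
      ring
    simp only
    rw [e]
    exact this

/-- The height one example. -/
theorem nice_example (k : ℕ) (hk : 1 ≤ k) :
    ∃ Q : Set (ℤ × ℤ), IsKNice k Q ∧ HeightLe Q 3 ∧ Q.ncard = k + 2 := by
  set F : Finset (ℤ × ℤ) := (Finset.range (k + 1)).image (fun i : ℕ => ((i : ℤ), (1 : ℤ))) with hF
  have hFm : ∀ p ∈ F, 0 ≤ p.1 ∧ p.1 ≤ k ∧ p.2 = 1 := by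
    intro p hp
    simp only [hF, Finset.mem_image, Finset.mem_range] at hp
    obtain ⟨i, hi, rfl⟩ := hp
    refine ⟨by simp, ?_, rfl⟩
    simp only
    omega
  have h0 : ((1 : ℤ), (0 : ℤ)) ∉ F := fun h => by
    have := (hFm _ h).2.2
    simp at this
  have hm : ∀ p ∈ insert ((1 : ℤ), (0 : ℤ)) F,
      (p.1 = 1 ∧ p.2 = 0) ∨ (0 ≤ p.1 ∧ p.1 ≤ k ∧ p.2 = 1) := by
    intro p hp
    rcases Finset.mem_insert.mp hp with rfl | hp
    · left; simp
    · right; exact hFm p hp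
  have hkz : (1 : ℤ) ≤ k := by exact_mod_cast hk
  refine ⟨((insert ((1 : ℤ), (0 : ℤ)) F : Finset (ℤ × ℤ)) : Set (ℤ × ℤ)), ⟨?_, ?_, ?_⟩, ?_, ?_⟩
  · rintro ⟨a, b⟩ hp
    have := hm _ (Finset.mem_coe.mp hp)
    simp only at this
    rcases this with ⟨rfl, rfl⟩ | ⟨_, _, rfl⟩ <;> simp
  · rintro ⟨a, b⟩ hp hq
    have h1 := hm _ (Finset.mem_coe.mp hp)
    have h2 := hm _ (Finset.mem_coe.mp hq)
    simp only [Prod.fst_neg, Prod.snd_neg] at h1 h2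
    omega
  · rintro ⟨a, b⟩ hp ⟨c, d⟩ hq
    have h1 := hm _ (Finset.mem_coe.mp hp)
    have h2 := hm _ (Finset.mem_coe.mp hq)
    simp only at h1 h2 ⊢
    rw [abs_le]
    rcases h1 with ⟨rfl, rfl⟩ | ⟨_, _, rfl⟩ <;> rcases h2 with ⟨rfl, rfl⟩ | ⟨_, _, rfl⟩ <;>
      constructor <;> linarith
  · rintro ⟨a, b⟩ hp
    have := hm _ (Finset.mem_coe.mp hp)
    simp only at this ⊢
    rcases this with ⟨rfl, rfl⟩ | ⟨_, _, rfl⟩ <;> simp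
  · rw [Set.ncard_coe_finset, Finset.card_insert_of_notMem h0, hF, Finset.card_image_of_injective,
      Finset.card_range]
    intro i i' h
    simpa using h

/-- Any nice set is matched by a nice set of height at most three or has at most `k + 2`
elements. -/
theorem nice_small_or (k : ℕ) (hk : 1892 ≤ k) (Q' : Set (ℤ × ℤ)) (hQ' : IsKNice k Q') :
    (∃ Q : Set (ℤ × ℤ), IsKNice k Q ∧ HeightLe Q 3 ∧ Q.ncard = Q'.ncard) ∨
      Q'.ncard ≤ k + 2 := by
  classical
  have hex : ∃ t : ℕ, ∃ Q : Set (ℤ × ℤ), IsKNice k Q ∧ HeightLe Q t ∧ Q.ncard = Q'.ncard := by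
    obtain ⟨hfin, -⟩ := nice_finite k Q' hQ'
    refine ⟨hfin.toFinset.sup (fun p => p.2.natAbs), Q', hQ', ?_, rfl⟩
    intro p hp
    have := Finset.le_sup (f := fun p : ℤ × ℤ => p.2.natAbs) (hfin.mem_toFinset.mpr hp)
    rw [Int.abs_eq_natAbs]
    exact_mod_cast this
  obtain ⟨h, hh⟩ : ∃ h, h = Nat.find hex := ⟨_, rfl⟩
  have hmin : ∀ t < h, ¬ ∃ Q : Set (ℤ × ℤ), IsKNice k Q ∧ HeightLe Q t ∧ Q.ncard = Q'.ncard := by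
    intro t ht
    rw [hh] at ht
    exact Nat.find_min hex ht
  obtain ⟨Q₀, hQ₀, hht₀, hcard₀⟩ : ∃ Q : Set (ℤ × ℤ), IsKNice k Q ∧ HeightLe Q h ∧
      Q.ncard = Q'.ncard := by
    rw [hh]
    exact Nat.find_spec hex
  rcases Nat.lt_or_ge 3 h with h3 | h3
  · right
    obtain ⟨Q, hQ, hcard, hpos, hht⟩ := nice_normalize k h Q₀ hQ₀ hht₀
    rw [hcard₀] at hcard
    obtain ⟨hfin, -⟩ := nice_finite k Q hQ
    rw [← hcard, Set.ncard_eq_toFinset_card Q hfin]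
    apply reduced_count k h hk h3 hfin.toFinset
    · intro p hp
      exact (hQ.1 p (hfin.mem_toFinset.mp hp)).2
    · intro p hp hq
      exact hQ.2.1 p (hfin.mem_toFinset.mp hp) (hfin.mem_toFinset.mp hq)
    · intro p hp q hq
      exact hQ.2.2 p (hfin.mem_toFinset.mp hp) q (hfin.mem_toFinset.mp hq)
    · intro p hp
      exact hpos p (hfin.mem_toFinset.mp hp)
    · intro p hp
      exact hht p (hfin.mem_toFinset.mp hp)
    · by_contra hcon
      push Not at hcon
      apply hmin (h - 1) (by omega)
      refine ⟨Q, hQ, ?_, hcard⟩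
      intro p hp
      have e1 := hcon p (hfin.mem_toFinset.mpr hp)
      have e2 := abs_le.mp (hht p hp)
      have e3 := hpos p hp
      rw [abs_of_nonneg e3]
      omega
    · intro j
      by_contra hcon
      push Not at hcon
      obtain ⟨hN, hC⟩ := nice_shear k j Q hQ
      apply hmin (h - 1) (by omega)
      refine ⟨_, hN, ?_, hC.trans hcard⟩
      rintro _ ⟨p, hp, rfl⟩
      have := hcon p (hfin.mem_toFinset.mpr hp)
      simp only
      omega
  · left
    exact ⟨Q₀, hQ₀, fun p hp => le_trans (hht₀ p hp) (by exact_mod_cast h3), hcard₀⟩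

theorem exists_max_kNice_height_le_three' (k : ℕ) (hk : 1892 ≤ k) :
    ∃ Q : Set (ℤ × ℤ), IsKNice k Q ∧ HeightLe Q 3 ∧
      ∀ Q' : Set (ℤ × ℤ), IsKNice k Q' → Q'.Finite ∧ Q'.ncard ≤ Q.ncard := by
  set S : Set ℕ := {n | ∃ Q : Set (ℤ × ℤ), IsKNice k Q ∧ HeightLe Q 3 ∧ Q.ncard = n} with hS
  have hex : k + 2 ∈ S := nice_example k (by omega)
  have hbdd : BddAbove S := by
    refine ⟨(k + 1) * (k + 1), ?_⟩
    rintro n ⟨Q, hQ, -, rfl⟩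
    exact (nice_finite k Q hQ).2
  obtain ⟨Q, hQ, hht, hcard⟩ := Nat.sSup_mem ⟨_, hex⟩ hbdd
  refine ⟨Q, hQ, hht, fun Q' hQ' => ⟨(nice_finite k Q' hQ').1, ?_⟩⟩
  rw [hcard]
  rcases nice_small_or k hk Q' hQ' with h | h
  · exact le_csSup hbdd h
  · exact le_trans h (le_csSup hbdd hex)
end

section
/- For every integer k ≥ 3, the maximum size of a k-nice subset of ℤ² of height at most 3 is: k+4 if k ≡ 2 (mod 6); k+3 if k mod 6 ∈ {1,3,5}; and k+2 if k mod 6 ∈ {0,4}. That is, every k-nice set of height at most 3 has at most this many elements, and there exists a k-nice set of height at most 3 with exactly this many elements. -/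
/-- The claimed maximum size of a `k`-nice set with height at most three. -/
def targetSize (k : ℕ) : ℕ :=
  if k % 6 = 2 then k + 4
  else if k % 6 = 1 ∨ k % 6 = 3 ∨ k % 6 = 5 then k + 3
  else k + 2

/-- membership up to sign -/
def MemPM (Q : Set (ℤ × ℤ)) (m n : ℤ) : Prop := (m, n) ∈ Q ∨ (-m, -n) ∈ Q

lemma MemPM.det {k : ℕ} {Q : Set (ℤ × ℤ)} (h : IsKNice k Q) {m n m' n' : ℤ}
    (h1 : MemPM Q m n) (h2 : MemPM Q m' n') : m * n' - m' * n ≤ k := by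
  obtain ⟨_, _, h⟩ := h
  rcases h1 with h1 | h1 <;> rcases h2 with h2 | h2 <;>
  · have := abs_le.1 (h _ h1 _ h2)
    simp only at this
    linarith [this.1, this.2]

/-- normalisation of the sign -/
def normPM (p : ℤ × ℤ) : ℤ × ℤ :=
  if 0 < p.2 then p else if p.2 < 0 then -p else (1, 0)

lemma exists_cover (S : Set ℤ) (k : ℤ) (h : ∀ x ∈ S, ∀ y ∈ S, x - y ≤ k) :
    ∃ I : Finset ℤ, (∀ x ∈ S, x ∈ I) ∧
      (I.card = 0 ∨ ∃ a ∈ S, ∃ b ∈ S, a ≤ b ∧ (I.card : ℤ) = b - a + 1) := by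
  rcases S.eq_empty_or_nonempty with rfl | ⟨x0, hx0⟩
  · exact ⟨∅, by simp, by simp⟩
  · obtain ⟨a, ha, ha'⟩ := Int.exists_least_of_bdd (P := fun x => x ∈ S)
      ⟨x0 - k, fun z hz => by have := h _ hx0 _ hz; linarith⟩ ⟨x0, hx0⟩
    obtain ⟨b, hb, hb'⟩ := Int.exists_greatest_of_bdd (P := fun x => x ∈ S)
      ⟨x0 + k, fun z hz => by have := h _ hz _ hx0; linarith⟩ ⟨x0, hx0⟩
    have hab := ha' b hb
    refine ⟨Finset.Icc a b, fun x hx => Finset.mem_Icc.2 ⟨ha' x hx, hb' x hx⟩,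
      Or.inr ⟨a, ha, b, hb, hab, ?_⟩⟩
    rw [Int.card_Icc]; omega

lemma normPM_injOn {k : ℕ} {Q : Set (ℤ × ℤ)} (h : IsKNice k Q) : Set.InjOn normPM Q := by
  rintro ⟨m, n⟩ hp ⟨m', n'⟩ hq heq
  obtain ⟨h1, h2, _⟩ := h
  have c1 := (h1 _ hp).2
  have c2 := (h1 _ hq).2
  have d1 := h2 _ hp
  have d2 := h2 _ hq
  have e1 : (m', n') ≠ -(m, n) := fun e => d1 (e ▸ hq)
  simp only [normPM] at heq
  simp only [Prod.neg_mk, ne_eq, Prod.mk.injEq] at *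
  split_ifs at heq <;> simp only [Prod.neg_mk, Prod.mk.injEq] at heq <;> try omega
  have hn : n = 0 := by omega
  have hn' : n' = 0 := by omega
  subst hn hn'
  simp at c1 c2
  omega

lemma upper (k : ℕ) (hk : 3 ≤ k) (Q : Set (ℤ × ℤ)) (h : IsKNice k Q) (hh : HeightLe Q 3) :
    Q.Finite ∧ Q.ncard ≤ targetSize k := by
  obtain ⟨I1, s1, c1⟩ := exists_cover {x | MemPM Q x 1} k (by
    intro x hx y hy
    have := MemPM.det h hx hy
    linarith)
  obtain ⟨I2, s2, c2⟩ := exists_cover {x | MemPM Q (2 * x + 1) 2} k (by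
    intro x hx y hy
    have := MemPM.det h hx hy
    omega)
  obtain ⟨I3, s3, c3⟩ := exists_cover {x | MemPM Q (x + x / 2 + 1) 3} k (by
    intro x hx y hy
    have := MemPM.det h hx hy
    omega)
  let F : Finset (ℤ × ℤ) := {(1, 0)} ∪ (I1.image (fun x => (x, 1)) ∪
    (I2.image (fun x => (2 * x + 1, 2)) ∪ I3.image (fun x => (x + x / 2 + 1, 3))))
  have key : ∀ m n : ℤ, MemPM Q m n → 0 < n → n ≤ 3 → Int.gcd m n = 1 → (m, n) ∈ F := by
    intro m n hm h0 h3 hg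
    simp only [F, Finset.mem_union, Finset.mem_image, Finset.mem_singleton, Prod.mk.injEq]
    have : n = 1 ∨ n = 2 ∨ n = 3 := by omega
    rcases this with rfl | rfl | rfl
    · exact Or.inr (Or.inl ⟨m, s1 _ hm, rfl, rfl⟩)
    · have hodd : m % 2 ≠ 0 := by
        intro h
        have := Int.dvd_coe_gcd (Int.dvd_of_emod_eq_zero h) (dvd_refl (2 : ℤ))
        rw [hg] at this
        omega
      have e : m = 2 * (m / 2) + 1 := by omega
      refine Or.inr (Or.inr (Or.inl ⟨m / 2, s2 _ ?_, e.symm, rfl⟩))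
      show MemPM Q _ _
      rwa [← e]
    · have hodd : m % 3 ≠ 0 := by
        intro h
        have := Int.dvd_coe_gcd (Int.dvd_of_emod_eq_zero h) (dvd_refl (3 : ℤ))
        rw [hg] at this
        omega
      obtain ⟨x, e⟩ : ∃ x : ℤ, x + x / 2 + 1 = m := ⟨2 * (m / 3) + m % 3 - 1, by omega⟩
      refine Or.inr (Or.inr (Or.inr ⟨x, s3 _ ?_, e, rfl⟩))
      show MemPM Q _ _
      rwa [e]
  have hsub : normPM '' Q ⊆ (F : Set (ℤ × ℤ)) := by
    rintro _ ⟨⟨m, n⟩, hp, rfl⟩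
    have hg := (h.1 _ hp).2
    have h3 := abs_le.1 (hh _ hp)
    simp only [Nat.cast_ofNat] at h3 hg
    rw [Finset.mem_coe]
    unfold normPM
    simp only
    split_ifs with i1 i2
    · exact key m n (Or.inl hp) i1 h3.2 hg
    · exact key (-m) (-n) (Or.inr (by simpa using hp)) (by omega) (by omega) (by simpa using hg)
    · simp [F]
  have hinj := normPM_injOn h
  have hfin : (normPM '' Q).Finite := F.finite_toSet.subset hsub
  refine ⟨hfin.of_finite_image hinj, ?_⟩
  have hcard : Q.ncard ≤ 1 + (I1.card + (I2.card + I3.card)) := by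
    rw [← Set.ncard_image_of_injOn hinj]
    refine (Set.ncard_le_ncard hsub F.finite_toSet).trans ?_
    rw [Set.ncard_coe_finset]
    refine (Finset.card_union_le _ _).trans (Nat.add_le_add (by simp) ?_)
    refine (Finset.card_union_le _ _).trans (Nat.add_le_add Finset.card_image_le ?_)
    exact (Finset.card_union_le _ _).trans (Nat.add_le_add Finset.card_image_le Finset.card_image_le)
  refine hcard.trans ?_
  have ht : targetSize k = k + 2 ∧ k % 2 = 0 ∨ targetSize k = k + 3 ∧ k % 2 = 1 ∨
      targetSize k = k + 4 ∧ k % 6 = 2 := by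
    unfold targetSize; split_ifs <;> omega
  have ht' : targetSize k = k + 2 ∧ k % 6 = 0 ∨ targetSize k = k + 3 ∧ k % 6 = 1 ∨
      targetSize k = k + 4 ∧ k % 6 = 2 ∨ targetSize k = k + 3 ∧ k % 6 = 3 ∨
      targetSize k = k + 2 ∧ k % 6 = 4 ∨ targetSize k = k + 3 ∧ k % 6 = 5 := by
    unfold targetSize; split_ifs <;> omega
  generalize targetSize k = T at *
  clear hcard hfin hinj hsub key s1 s2 s3 hh F
  have D := @MemPM.det k Q h
  rcases c3 with c3 | ⟨e, he, f, hf, hef, c3⟩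
  · rcases c1 with c1 | ⟨a, ha, b, hb, hab, c1⟩ <;>
    rcases c2 with c2 | ⟨c, hc, d, hd, hcd, c2⟩
    · omega
    · have := D hd hc
      omega
    · have := D hb ha
      omega
    · have := D hb hc
      have := D hd ha
      omega
  · have d33 := D hf he
    rcases c1 with c1 | ⟨a, ha, b, hb, hab, c1⟩ <;>
    rcases c2 with c2 | ⟨c, hc, d, hd, hcd, c2⟩
    · omega
    · have := D hd hc
      have := D hd he
      have := D hf hc
      omega
    · have := D hb he
      have := D hf ha
      omega
    · have g1 := D hb he
      have g2 := D hf ha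
      have g3 := D hd he
      have g4 := D hf hc
      clear d33 D ha hb hc hd he hf ht
      obtain ⟨u, hu⟩ : ∃ u, u = e / 2 := ⟨_, rfl⟩
      obtain ⟨v, hv⟩ : ∃ v, v = f / 2 := ⟨_, rfl⟩
      rw [← hu] at g1 g3
      rw [← hv] at g2 g4
      have hu' : e = 2 * u ∨ e = 2 * u + 1 := by omega
      have hv' : f = 2 * v ∨ f = 2 * v + 1 := by omega
      clear hu hv
      obtain ⟨q, hq⟩ : ∃ q, q = k / 6 := ⟨_, rfl⟩
      rcases ht' with ⟨t, ht⟩ | ⟨t, ht⟩ | ⟨t, ht⟩ | ⟨t, ht⟩ | ⟨t, ht⟩ | ⟨t, ht⟩ <;>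
      rcases hu' with rfl | rfl <;> rcases hv' with rfl | rfl <;> omega

lemma nice_of_pos {k : ℕ} {Q : Set (ℤ × ℤ)}
    (h1 : ∀ p ∈ Q, (0 < p.2 ∨ p = (1, 0)) ∧ Int.gcd p.1 p.2 = 1)
    (h3 : ∀ p ∈ Q, ∀ q ∈ Q, p.1 * q.2 - q.1 * p.2 ≤ (k : ℤ)) : IsKNice k Q := by
  refine ⟨fun p hp => ⟨?_, (h1 p hp).2⟩, fun p hp hn => ?_, fun p hp q hq => ?_⟩
  · rintro rfl
    have := h1 _ hp
    simp at this
  · have a := (h1 _ hp).1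
    have b := (h1 _ hn).1
    rcases p with ⟨m, n⟩
    simp only [Prod.neg_mk, Prod.mk.injEq] at a b
    omega
  · have a := h3 p hp q hq
    have b := h3 q hq p hp
    exact abs_le.2 ⟨by linarith, a⟩

/-- the extremal family -/
def fam (I1 I2 I3 : Finset ℤ) : Finset (ℤ × ℤ) :=
  {(1, 0)} ∪ (I1.image (fun x => (x, 1)) ∪
    (I2.image (fun x => (2 * x + 1, 2)) ∪ I3.image (fun x => (x + x / 2 + 1, 3))))

lemma mem_fam {I1 I2 I3 : Finset ℤ} {p : ℤ × ℤ} : p ∈ fam I1 I2 I3 ↔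
    p = (1, 0) ∨ (∃ x ∈ I1, (x, 1) = p) ∨ (∃ x ∈ I2, (2 * x + 1, 2) = p) ∨
      ∃ x ∈ I3, (x + x / 2 + 1, 3) = p := by
  simp [fam]

lemma card_fam (I1 I2 I3 : Finset ℤ) :
    (fam I1 I2 I3).card = 1 + (I1.card + (I2.card + I3.card)) := by
  unfold fam
  rw [Finset.card_union_of_disjoint, Finset.card_union_of_disjoint,
    Finset.card_union_of_disjoint, Finset.card_image_of_injective, Finset.card_image_of_injective,
    Finset.card_image_of_injective, Finset.card_singleton]
  · intro x y hxy; simp only [Prod.mk.injEq] at hxy; omega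
  · intro x y hxy; simp only [Prod.mk.injEq] at hxy; omega
  · intro x y hxy; simp only [Prod.mk.injEq] at hxy; omega
  all_goals
    rw [Finset.disjoint_left]
    rintro ⟨m, n⟩ h1 h2
    simp only [Finset.mem_union, Finset.mem_image, Finset.mem_singleton, Prod.mk.injEq] at h1 h2
    grind

lemma gcd_fam {I1 I2 I3 : Finset ℤ} {p : ℤ × ℤ} (hp : p ∈ fam I1 I2 I3) :
    (0 < p.2 ∨ p = (1, 0)) ∧ Int.gcd p.1 p.2 = 1 := by
  rcases mem_fam.1 hp with rfl | ⟨x, _, rfl⟩ | ⟨x, _, rfl⟩ | ⟨x, _, rfl⟩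
  · simp
  · simp
  · refine ⟨by simp, ?_⟩
    refine Int.isCoprime_iff_gcd_eq_one.1 ⟨1, -x, by ring⟩
  · refine ⟨by simp, ?_⟩
    refine Int.isCoprime_iff_gcd_eq_one.1 ?_
    rcases Int.emod_two_eq_zero_or_one x with h | h
    · exact ⟨1, -(x / 2), by show 1 * (x + x / 2 + 1) + _ * 3 = 1; omega⟩
    · exact ⟨-1, (x / 2) + 1, by show -1 * (x + x / 2 + 1) + _ * 3 = 1; omega⟩

lemma height_fam (I1 I2 I3 : Finset ℤ) : HeightLe (fam I1 I2 I3 : Set (ℤ × ℤ)) 3 := by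
  intro p hp
  rcases mem_fam.1 hp with rfl | ⟨x, _, rfl⟩ | ⟨x, _, rfl⟩ | ⟨x, _, rfl⟩ <;> simp

lemma lower (k : ℕ) (hk : 3 ≤ k) : ∃ Q : Set (ℤ × ℤ), IsKNice k Q ∧ HeightLe Q 3 ∧
      Q.Finite ∧ Q.ncard = targetSize k := by
  suffices hs : ∃ I1 I2 I3 : Finset ℤ, (∀ p ∈ fam I1 I2 I3, ∀ q ∈ fam I1 I2 I3,
      p.1 * q.2 - q.1 * p.2 ≤ (k : ℤ)) ∧ 1 + (I1.card + (I2.card + I3.card)) = targetSize k by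
    obtain ⟨I1, I2, I3, h1, h2⟩ := hs
    refine ⟨fam I1 I2 I3, nice_of_pos (fun p hp => gcd_fam hp) h1, height_fam _ _ _,
      Finset.finite_toSet _, ?_⟩
    rw [Set.ncard_coe_finset, card_fam, h2]
  by_cases h6 : k % 6 = 2
  · obtain ⟨t, rfl⟩ : ∃ t, k = 6 * t + 2 := ⟨k / 6, by omega⟩
    obtain ⟨s, hs⟩ : ∃ s : ℤ, s = (t : ℤ) / 2 := ⟨_, rfl⟩
    refine ⟨Finset.Icc (s - 2 * t) (2 * t + 1), Finset.Icc (s - t) t,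
      Finset.Icc 0 (2 * s + 1), ?_, ?_⟩
    · intro p hp q hq
      rcases mem_fam.1 hp with rfl | ⟨x, hx, rfl⟩ | ⟨x, hx, rfl⟩ | ⟨x, hx, rfl⟩ <;>
      rcases mem_fam.1 hq with rfl | ⟨y, hy, rfl⟩ | ⟨y, hy, rfl⟩ | ⟨y, hy, rfl⟩ <;>
      simp only [Finset.mem_Icc] at * <;> push_cast <;> omega
    · simp only [Int.card_Icc, targetSize, h6, if_true]
      omega
  · rcases Nat.mod_two_eq_zero_or_one k with h2 | h2
    · refine ⟨Finset.Icc 0 k, ∅, ∅, ?_, ?_⟩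
      · intro p hp q hq
        rcases mem_fam.1 hp with rfl | ⟨x, hx, rfl⟩ | ⟨x, hx, rfl⟩ | ⟨x, hx, rfl⟩ <;>
        rcases mem_fam.1 hq with rfl | ⟨y, hy, rfl⟩ | ⟨y, hy, rfl⟩ | ⟨y, hy, rfl⟩ <;>
        simp only [Finset.mem_Icc, Finset.notMem_empty] at * <;> omega
      · simp only [Int.card_Icc, targetSize, Finset.card_empty]
        split_ifs <;> omega
    · refine ⟨Finset.Icc 0 k, {(k : ℤ) / 2}, ∅, ?_, ?_⟩
      · intro p hp q hq
        rcases mem_fam.1 hp with rfl | ⟨x, hx, rfl⟩ | ⟨x, hx, rfl⟩ | ⟨x, hx, rfl⟩ <;>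
        rcases mem_fam.1 hq with rfl | ⟨y, hy, rfl⟩ | ⟨y, hy, rfl⟩ | ⟨y, hy, rfl⟩ <;>
        simp only [Finset.mem_Icc, Finset.notMem_empty, Finset.mem_singleton] at * <;> omega
      · simp only [Int.card_Icc, targetSize, Finset.card_empty, Finset.card_singleton]
        split_ifs <;> omega


theorem max_size_kNice_height_le_three (k : ℕ) (hk : 3 ≤ k) :
    (∀ Q : Set (ℤ × ℤ), IsKNice k Q → HeightLe Q 3 →
      Q.Finite ∧ Q.ncard ≤ targetSize k) ∧
    (∃ Q : Set (ℤ × ℤ), IsKNice k Q ∧ HeightLe Q 3 ∧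
      Q.Finite ∧ Q.ncard = targetSize k) := by
  exact ⟨fun Q h hh => upper k hk Q h hh, lower k hk⟩
end

section
/- For every integer k ≥ 3: every y-non-negative k-nice subset of ℤ² of height exactly 1 has at most k+2 elements, and the set {(1,0)} ∪ {(x,1) : 0 ≤ x ≤ k} is a y-non-negative k-nice set of height 1 with exactly k+2 elements. -/
/-- The explicit set as a finite set: one base point plus the points `(x, 1)`, `a ≤ x ≤ a + k`. -/
theorem stripFinset_card_le (k : ℕ) (a e : ℤ) :
    (insert (e, (0 : ℤ)) ((Finset.Icc a (a + k)).image (fun x : ℤ => (x, (1 : ℤ))))).card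
      = k + 2 := by
  rw [Finset.card_insert_of_notMem (by simp), Finset.card_image_of_injective, Int.card_Icc]
  · omega
  · intro x y h
    simpa using h

theorem kNice_height_one (k : ℕ) (hk : 3 ≤ k) :
    (∀ Q : Set (ℤ × ℤ), IsKNice k Q → YNonneg Q → HeightEq Q 1 →
      Q.Finite ∧ Q.ncard ≤ k + 2) ∧
    (IsKNice k ({((1 : ℤ), (0 : ℤ))} ∪ {p : ℤ × ℤ | 0 ≤ p.1 ∧ p.1 ≤ (k : ℤ) ∧ p.2 = 1}) ∧
     YNonneg ({((1 : ℤ), (0 : ℤ))} ∪ {p : ℤ × ℤ | 0 ≤ p.1 ∧ p.1 ≤ (k : ℤ) ∧ p.2 = 1}) ∧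
     HeightEq ({((1 : ℤ), (0 : ℤ))} ∪ {p : ℤ × ℤ | 0 ≤ p.1 ∧ p.1 ≤ (k : ℤ) ∧ p.2 = 1}) 1 ∧
     ({((1 : ℤ), (0 : ℤ))} ∪ {p : ℤ × ℤ | 0 ≤ p.1 ∧ p.1 ≤ (k : ℤ) ∧ p.2 = 1}).ncard = k + 2) := by
  refine ⟨?_, ?_, ?_, ?_, ?_⟩
  · rintro Q ⟨h1, h2, h3⟩ hy ⟨hle, p, hp, hp1⟩
    have hp2 : p.2 = 1 := by
      have := hy p hp
      rw [abs_of_nonneg this] at hp1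
      exact_mod_cast hp1
    have hlev : ∀ q ∈ Q, q.2 = 0 ∨ q.2 = 1 := by
      intro q hq
      have a1 := hy q hq
      have a2 := hle q hq
      rw [abs_of_nonneg a1] at a2
      push_cast at a2
      omega
    have hdiff : ∀ q ∈ Q, ∀ r ∈ Q, q.2 = 1 → r.2 = 1 → r.1 ≤ q.1 + k := by
      intro q hq r hr hq1 hr1
      have := h3 q hq r hr
      rw [hq1, hr1, abs_le] at this
      linarith [this.1]
    obtain ⟨a, ⟨ha, hamin⟩⟩ := Int.exists_least_of_bdd (P := fun x => (x, (1 : ℤ)) ∈ Q)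
      ⟨p.1 - k, fun z hz => by
        have := hdiff _ hz p hp rfl hp2
        simp only at this
        linarith⟩ ⟨p.1, by rw [← hp2]; exact hp⟩
    have hzero : ∀ q ∈ Q, q.2 = 0 → q.1 = 1 ∨ q.1 = -1 := by
      intro q hq hq0
      have := (h1 q hq).2
      rw [hq0, Int.gcd_zero_right] at this
      omega
    obtain ⟨e, he⟩ : ∃ e : ℤ, ∀ q ∈ Q, q.2 = 0 → q.1 = e := by
      by_cases h : ((1 : ℤ), (0 : ℤ)) ∈ Q
      · refine ⟨1, fun q hq hq0 => ?_⟩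
        rcases hzero q hq hq0 with h' | h'
        · exact h'
        · exfalso
          apply h2 _ h
          have : q = -((1 : ℤ), (0 : ℤ)) := Prod.ext (by simpa using h') (by simpa using hq0)
          rwa [← this]
      · refine ⟨-1, fun q hq hq0 => ?_⟩
        rcases hzero q hq hq0 with h' | h'
        · exfalso
          apply h
          have : q = ((1 : ℤ), (0 : ℤ)) := Prod.ext h' hq0
          rwa [← this]
        · exact h'
    have hsub : Q ⊆ ((insert (e, (0 : ℤ))
        ((Finset.Icc a (a + k)).image (fun x : ℤ => (x, (1 : ℤ)))) : Finset (ℤ × ℤ)) :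
        Set (ℤ × ℤ)) := by
      intro q hq
      rw [Finset.mem_coe, Finset.mem_insert, Finset.mem_image]
      rcases hlev q hq with h | h
      · exact Or.inl (Prod.ext (he q hq h) h)
      · refine Or.inr ⟨q.1, Finset.mem_Icc.2 ⟨hamin _ ?_, hdiff _ ha q hq rfl h⟩,
          Prod.ext rfl h.symm⟩
        rw [← h]
        exact hq
    refine ⟨(Finset.finite_toSet _).subset hsub, ?_⟩
    have := Set.ncard_le_ncard hsub (Finset.finite_toSet _)
    rwa [Set.ncard_coe_finset, stripFinset_card_le] at this
  · refine ⟨?_, ?_, ?_⟩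
    · rintro ⟨x, y⟩ (h | ⟨h1, h2, h3⟩)
      · obtain ⟨rfl, rfl⟩ := Prod.mk.inj h
        simp
      · simp only at h3
        subst h3
        simp
    · rintro ⟨x, y⟩ (h | ⟨h1, h2, h3⟩) (h' | ⟨h1', h2', h3'⟩) <;> simp_all
      all_goals omega
    · rintro ⟨x, y⟩ (h | ⟨h1, h2, h3⟩) ⟨x', y'⟩ (h' | ⟨h1', h2', h3'⟩) <;> simp_all
      all_goals first | omega | (rw [abs_le]; constructor <;> omega)
  · rintro ⟨x, y⟩ (h | ⟨h1, h2, h3⟩) <;> simp_all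
  · refine ⟨?_, (0, 1), Or.inr ⟨by simp, by simp, rfl⟩, by simp⟩
    rintro ⟨x, y⟩ (h | ⟨h1, h2, h3⟩) <;> simp_all
  · have : ({((1 : ℤ), (0 : ℤ))} ∪ {p : ℤ × ℤ | 0 ≤ p.1 ∧ p.1 ≤ (k : ℤ) ∧ p.2 = 1})
        = ((insert ((1 : ℤ), (0 : ℤ))
        ((Finset.Icc 0 (0 + (k : ℤ))).image (fun x : ℤ => (x, (1 : ℤ)))) : Finset (ℤ × ℤ)) :
        Set (ℤ × ℤ)) := by
      ext ⟨x, y⟩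
      simp [and_assoc, eq_comm]
    rw [this, Set.ncard_coe_finset, stripFinset_card_le]
end

section
/- For every integer k ≥ 3: every y-non-negative k-nice subset of ℤ² of height exactly 2 has at most k+3 elements; if k is even, every such set has at most k+2 elements; and if k is odd, there exists a y-non-negative k-nice set of height 2 with exactly k+3 elements (for example {(1,0), (k,2)} ∪ {(x,1) : 0 ≤ x ≤ k}). -/
/-- Covering set for the upper bound: with `a`, `b` the extreme abscissae at level two. -/
theorem kNice_cover (k : ℕ) (Q : Set (ℤ × ℤ)) (hQ : IsKNice k Q) (hy : YNonneg Q)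
    (hh : HeightEq Q 2) : ∃ a b : ℤ, a % 2 = 1 ∧ b % 2 = 1 ∧ a ≤ b ∧ 2 * (b - a) ≤ k ∧
      Q.Finite ∧ Q.ncard ≤
        1 + ((b - a) / 2 + 1).toNat + ((a + k) / 2 + 1 - (b - k + 1) / 2).toNat := by
  obtain ⟨h1, h2, h3⟩ := hQ
  obtain ⟨hle, ⟨m, n⟩, hp, hn⟩ := hh
  have hn2 : n = 2 := by
    have h0 := hy _ hp
    simp only at h0 hn
    rw [abs_of_nonneg h0] at hn
    exact_mod_cast hn
  subst hn2
  have hodd : ∀ x : ℤ, (x, (2 : ℤ)) ∈ Q → x % 2 = 1 := by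
    intro x hx
    have h := (h1 _ hx).2
    simp only at h
    by_contra hne
    have hd : (2 : ℤ) ∣ x := by omega
    have h5 := Int.dvd_coe_gcd hd (dvd_refl 2)
    rw [h] at h5
    norm_num at h5
  have hdet : ∀ x y : ℤ, (x, (2 : ℤ)) ∈ Q → (y, (2 : ℤ)) ∈ Q → 2 * (x - y) ≤ k := by
    intro x y hx hy'
    have := (abs_le.1 (h3 _ hx _ hy')).2
    simp only at this
    linarith
  obtain ⟨a, ha, hamin⟩ := Int.exists_least_of_bdd (P := fun x => (x, (2 : ℤ)) ∈ Q)
    ⟨m - k, fun z hz => by have := hdet m z hp hz; omega⟩ ⟨m, hp⟩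
  obtain ⟨b, hb, hbmax⟩ := Int.exists_greatest_of_bdd (P := fun x => (x, (2 : ℤ)) ∈ Q)
    ⟨m + k, fun z hz => by have := hdet z m hz hp; omega⟩ ⟨m, hp⟩
  have hao := hodd a ha
  have hbo := hodd b hb
  have hab := hamin b hb
  have hzero : ∃ e : ℤ, ∀ x : ℤ, (x, (0 : ℤ)) ∈ Q → x = e := by
    have hx1 : ∀ x : ℤ, (x, (0 : ℤ)) ∈ Q → x = 1 ∨ x = -1 := by
      intro x hx
      have h := (h1 _ hx).2
      simp only [Int.gcd_zero_right] at h
      omega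
    by_cases h : ((1 : ℤ), (0 : ℤ)) ∈ Q
    · refine ⟨1, fun x hx => ?_⟩
      rcases hx1 x hx with rfl | rfl
      · rfl
      · exact absurd hx (by simpa using h2 _ h)
    · refine ⟨-1, fun x hx => ?_⟩
      rcases hx1 x hx with rfl | rfl
      · exact absurd hx h
      · rfl
  obtain ⟨e, he⟩ := hzero
  let A : Finset (ℤ × ℤ) := {(e, 0)}
  let B : Finset (ℤ × ℤ) :=
    (Finset.Icc (0 : ℤ) ((b - a) / 2)).image (fun i => (a + 2 * i, (2 : ℤ)))
  let C : Finset (ℤ × ℤ) :=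
    (Finset.Icc ((b - k + 1) / 2) ((a + k) / 2)).image (fun i => (i, (1 : ℤ)))
  have hsub : Q ⊆ ((A ∪ B ∪ C : Finset (ℤ × ℤ)) : Set (ℤ × ℤ)) := by
    rintro ⟨x, y⟩ hx
    have hy0 := hy _ hx
    have hy2 := (abs_le.1 (hle _ hx)).2
    simp only [Nat.cast_ofNat] at hy0 hy2
    have hcase : y = 0 ∨ y = 1 ∨ y = 2 := by omega
    simp only [Finset.coe_union, Set.mem_union, Finset.mem_coe]
    rcases hcase with rfl | rfl | rfl
    · left; left
      simp [A, he x hx]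
    · right
      have e1 := abs_le.1 (h3 _ hx _ ha)
      have e2 := abs_le.1 (h3 _ hx _ hb)
      simp only at e1 e2
      refine Finset.mem_image.2 ⟨x, Finset.mem_Icc.2 ⟨?_, ?_⟩, rfl⟩ <;> omega
    · left; right
      have e1 := hamin x hx
      have e2 := hbmax x hx
      have e3 := hodd x hx
      refine Finset.mem_image.2 ⟨(x - a) / 2, Finset.mem_Icc.2 ⟨?_, ?_⟩, ?_⟩
      · omega
      · omega
      · ext
        · simp only; omega
        · rfl
  refine ⟨a, b, hao, hbo, hab, hdet b a hb ha, (Finset.finite_toSet _).subset hsub, ?_⟩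
  have hc := Set.ncard_le_ncard hsub (Finset.finite_toSet _)
  rw [Set.ncard_coe_finset] at hc
  have c1 := Finset.card_union_le (A ∪ B) C
  have c2 := Finset.card_union_le A B
  have cA : A.card = 1 := Finset.card_singleton _
  have cB : B.card ≤ ((b - a) / 2 + 1).toNat :=
    Finset.card_image_le.trans (by simp [Int.card_Icc])
  have cC : C.card ≤ ((a + k) / 2 + 1 - (b - k + 1) / 2).toNat :=
    Finset.card_image_le.trans (by simp [Int.card_Icc])
  omega

theorem kNice_height_two (k : ℕ) (hk : 3 ≤ k) :
    (∀ Q : Set (ℤ × ℤ), IsKNice k Q → YNonneg Q → HeightEq Q 2 →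
      Q.Finite ∧ Q.ncard ≤ k + 3) ∧
    (k % 2 = 0 → ∀ Q : Set (ℤ × ℤ), IsKNice k Q → YNonneg Q → HeightEq Q 2 →
      Q.Finite ∧ Q.ncard ≤ k + 2) ∧
    (k % 2 = 1 →
      IsKNice k ({((1 : ℤ), (0 : ℤ)), ((k : ℤ), (2 : ℤ))} ∪
        {p : ℤ × ℤ | 0 ≤ p.1 ∧ p.1 ≤ (k : ℤ) ∧ p.2 = 1}) ∧
      YNonneg ({((1 : ℤ), (0 : ℤ)), ((k : ℤ), (2 : ℤ))} ∪
        {p : ℤ × ℤ | 0 ≤ p.1 ∧ p.1 ≤ (k : ℤ) ∧ p.2 = 1}) ∧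
      HeightEq ({((1 : ℤ), (0 : ℤ)), ((k : ℤ), (2 : ℤ))} ∪
        {p : ℤ × ℤ | 0 ≤ p.1 ∧ p.1 ≤ (k : ℤ) ∧ p.2 = 1}) 2 ∧
      ({((1 : ℤ), (0 : ℤ)), ((k : ℤ), (2 : ℤ))} ∪
        {p : ℤ × ℤ | 0 ≤ p.1 ∧ p.1 ≤ (k : ℤ) ∧ p.2 = 1}).ncard = k + 3) := by
  refine ⟨?_, ?_, ?_⟩
  · intro Q hQ hy hh
    obtain ⟨a, b, h1, h2, h3, h4, hf, hc⟩ := kNice_cover k Q hQ hy hh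
    exact ⟨hf, by omega⟩
  · intro hk2 Q hQ hy hh
    obtain ⟨a, b, h1, h2, h3, h4, hf, hc⟩ := kNice_cover k Q hQ hy hh
    exact ⟨hf, by omega⟩
  · intro hodd
    refine ⟨⟨?_, ?_, ?_⟩, ?_, ⟨?_, ?_⟩, ?_⟩
    · rintro ⟨x, y⟩ ((h | h) | ⟨h1, h2, h3⟩)
      · cases h; simp
      · cases h
        refine ⟨by simp, ?_⟩
        have : Nat.Coprime k 2 := (Nat.coprime_two_right).2 (Nat.odd_iff.2 hodd)
        exact_mod_cast this
      · simp only at h3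
        subst h3
        simp
    · rintro ⟨x, y⟩ ((h | h) | ⟨h1, h2, h3⟩) ((h' | h') | ⟨h1', h2', h3'⟩) <;>
        simp_all [Prod.ext_iff] <;> omega
    · rintro ⟨x, y⟩ ((h | h) | ⟨h1, h2, h3⟩) ⟨x', y'⟩ ((h' | h') | ⟨h1', h2', h3'⟩) <;>
        simp only [Set.mem_singleton_iff, Prod.mk.injEq] at * <;>
        (try obtain ⟨rfl, rfl⟩ := h) <;> (try obtain ⟨rfl, rfl⟩ := h') <;>
        (try subst h3) <;> (try subst h3') <;> rw [abs_le] <;> constructor <;> omega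
    · rintro ⟨x, y⟩ ((h | h) | ⟨h1, h2, h3⟩) <;> simp_all [Prod.ext_iff]
    · rintro ⟨x, y⟩ ((h | h) | ⟨h1, h2, h3⟩) <;> simp_all [Prod.ext_iff]
    · exact ⟨((k : ℤ), 2), Or.inl (Or.inr rfl), by simp⟩
    · have hS : ({((1 : ℤ), (0 : ℤ)), ((k : ℤ), (2 : ℤ))} ∪
          {p : ℤ × ℤ | 0 ≤ p.1 ∧ p.1 ≤ (k : ℤ) ∧ p.2 = 1}) =
          ((insert ((1 : ℤ), (0 : ℤ)) (insert ((k : ℤ), (2 : ℤ))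
            ((Finset.Icc (0 : ℤ) k).image (fun i => (i, (1 : ℤ))))) : Finset (ℤ × ℤ)) :
              Set (ℤ × ℤ)) := by
        ext ⟨x, y⟩
        simp only [Set.mem_union, Set.mem_insert_iff, Set.mem_singleton_iff, Set.mem_setOf_eq,
          Finset.coe_insert, Finset.coe_image, Set.mem_image, Finset.mem_coe, Finset.mem_Icc,
          Prod.mk.injEq]
        constructor
        · rintro ((h | h) | ⟨h1, h2, h3⟩)
          · exact Or.inl h
          · exact Or.inr (Or.inl h)
          · exact Or.inr (Or.inr ⟨x, ⟨h1, h2⟩, rfl, h3.symm⟩)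
        · rintro (h | h | ⟨z, ⟨h1, h2⟩, rfl, h3⟩)
          · exact Or.inl (Or.inl h)
          · exact Or.inl (Or.inr h)
          · exact Or.inr ⟨h1, h2, h3.symm⟩
      rw [hS, Set.ncard_coe_finset, Finset.card_insert_of_notMem, Finset.card_insert_of_notMem,
        Finset.card_image_of_injective, Int.card_Icc]
      · omega
      · intro x y h
        exact (Prod.mk.inj h).1
      · simp
      · simp
end

section
/- For every integer k ≥ 3: every y-non-negative k-nice subset of ℤ² of height exactly 3 has at most k+4 elements; if a y-non-negative k-nice set of height 3 has exactly k+4 elements, then k ≡ 2 (mod 6); conversely, if k ≡ 2 (mod 6), then there exists a y-non-negative k-nice set of height 3 with exactly k+4 elements; and if k ≡ 0 (mod 6) or k ≡ 4 (mod 6), then every y-non-negative k-nice set of height exactly 3 has at most k+2 elements. -/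
/-- The finite set used both for the upper bounds and the construction. -/
noncomputable def rowsF (e l1 h1 l2 h2 l3 h3 l4 h4 : ℤ) : Finset (ℤ × ℤ) :=
  {(e, 0)} ∪ ((Finset.Icc l1 h1).image (fun j : ℤ => (j, (1 : ℤ))) ∪
    ((Finset.Icc l2 h2).image (fun j : ℤ => (2 * j + 1, (2 : ℤ))) ∪
    ((Finset.Icc l3 h3).image (fun j : ℤ => (3 * j + 1, (3 : ℤ))) ∪
     (Finset.Icc l4 h4).image (fun j : ℤ => (3 * j + 2, (3 : ℤ))))))

lemma mem_rowsF (e l1 h1 l2 h2 l3 h3 l4 h4 : ℤ) (p : ℤ × ℤ) :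
    p ∈ rowsF e l1 h1 l2 h2 l3 h3 l4 h4 ↔
      (p.1 = e ∧ p.2 = 0) ∨ (p.2 = 1 ∧ l1 ≤ p.1 ∧ p.1 ≤ h1) ∨
      (p.2 = 2 ∧ ∃ j, l2 ≤ j ∧ j ≤ h2 ∧ p.1 = 2 * j + 1) ∨
      (p.2 = 3 ∧ ∃ j, l3 ≤ j ∧ j ≤ h3 ∧ p.1 = 3 * j + 1) ∨
      (p.2 = 3 ∧ ∃ j, l4 ≤ j ∧ j ≤ h4 ∧ p.1 = 3 * j + 2) := by
  obtain ⟨m, n⟩ := p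
  simp only [rowsF, Finset.mem_union, Finset.mem_singleton, Finset.mem_image, Finset.mem_Icc,
    Prod.mk.injEq]
  refine or_congr Iff.rfl (or_congr ?_ (or_congr ?_ (or_congr ?_ ?_)))
  · constructor
    · rintro ⟨j, ⟨h1, h2⟩, h3, h4⟩; omega
    · rintro ⟨h1, h2, h3⟩; exact ⟨m, ⟨h2, h3⟩, rfl, h1.symm⟩
  all_goals
    constructor
    · rintro ⟨j, ⟨h1, h2⟩, h3, h4⟩; exact ⟨h4.symm, j, h1, h2, h3.symm⟩
    · rintro ⟨h4, j, h1, h2, h3⟩; exact ⟨j, ⟨h1, h2⟩, h3.symm, h4.symm⟩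

lemma card_rowsF_le (e l1 h1 l2 h2 l3 h3 l4 h4 : ℤ) :
    (rowsF e l1 h1 l2 h2 l3 h3 l4 h4).card ≤
      1 + ((h1 + 1 - l1).toNat + ((h2 + 1 - l2).toNat +
        ((h3 + 1 - l3).toNat + (h4 + 1 - l4).toNat))) := by
  unfold rowsF
  refine (Finset.card_union_le _ _).trans (Nat.add_le_add (by simp) ?_)
  refine (Finset.card_union_le _ _).trans
    (Nat.add_le_add (Finset.card_image_le.trans (by simp)) ?_)
  refine (Finset.card_union_le _ _).trans
    (Nat.add_le_add (Finset.card_image_le.trans (by simp)) ?_)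
  exact (Finset.card_union_le _ _).trans
    (Nat.add_le_add (Finset.card_image_le.trans (by simp)) (Finset.card_image_le.trans (by simp)))

lemma card_rowsF (e l1 h1 l2 h2 l3 h3 l4 h4 : ℤ) :
    (rowsF e l1 h1 l2 h2 l3 h3 l4 h4).card =
      1 + ((h1 + 1 - l1).toNat + ((h2 + 1 - l2).toNat +
        ((h3 + 1 - l3).toNat + (h4 + 1 - l4).toNat))) := by
  unfold rowsF
  rw [Finset.card_union_of_disjoint, Finset.card_union_of_disjoint,
    Finset.card_union_of_disjoint, Finset.card_union_of_disjoint,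
    Finset.card_image_of_injective, Finset.card_image_of_injective,
    Finset.card_image_of_injective, Finset.card_image_of_injective]
  · simp
  all_goals first
    | (intro x y h
       simp only [Prod.mk.injEq] at h
       omega)
    | (rw [Finset.disjoint_left]
       rintro ⟨m, n⟩ h h'
       simp only [Finset.mem_union, Finset.mem_singleton, Finset.mem_image, Finset.mem_Icc,
         Prod.mk.injEq] at h h'
       grind)

lemma exists_rows (k : ℕ) (Q : Set (ℤ × ℤ)) (hQ : IsKNice k Q) (hY : YNonneg Q)
    (hH : HeightEq Q 3) : ∃ a b e : ℤ, a ≤ b ∧ 3 * (b - a) ≤ k ∧ a % 3 ≠ 0 ∧ b % 3 ≠ 0 ∧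
      Q ⊆ (rowsF e ((b - k + 2) / 3) ((k + a) / 3) ((2 * b - k + 2) / 6) ((k + 2 * a - 3) / 6)
        ((a + 1) / 3) ((b - 1) / 3) (a / 3) ((b - 2) / 3) : Finset (ℤ × ℤ)) := by
  obtain ⟨hcop, hneg, hdet⟩ := hQ
  obtain ⟨hle, ⟨m0, n0⟩, hp0, hn0⟩ := hH
  have h3 : n0 = 3 := by
    have := hY _ hp0
    simp only at this hn0
    rw [abs_of_nonneg this] at hn0
    exact_mod_cast hn0
  subst h3
  have hd : ∀ m n m' n', (m, n) ∈ Q → (m', n') ∈ Q →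
      m * n' - m' * n ≤ k ∧ -(k : ℤ) ≤ m * n' - m' * n := by
    intro m n m' n' h h'
    have := abs_le.1 (hdet _ h _ h')
    exact ⟨this.2, this.1⟩
  -- maximum and minimum of the third row
  obtain ⟨b, hb, hbmax⟩ := Int.exists_greatest_of_bdd (P := fun m => (m, 3) ∈ Q)
    ⟨m0 + k, fun z hz => by have := hd _ _ _ _ hz hp0; omega⟩ ⟨m0, hp0⟩
  obtain ⟨a, ha, hamin⟩ := Int.exists_least_of_bdd (P := fun m => (m, 3) ∈ Q)
    ⟨m0 - k, fun z hz => by have := hd _ _ _ _ hz hp0; omega⟩ ⟨m0, hp0⟩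
  have hmod3 : ∀ m, (m, (3 : ℤ)) ∈ Q → m % 3 ≠ 0 := by
    intro m hm h0
    have h1 := (hcop _ hm).2
    have h2 : (3 : ℤ) ∣ (Int.gcd m 3 : ℤ) :=
      Int.dvd_coe_gcd (Int.dvd_of_emod_eq_zero h0) (dvd_refl _)
    simp only at h1
    rw [h1] at h2
    omega
  have hmod2 : ∀ m, (m, (2 : ℤ)) ∈ Q → m % 2 ≠ 0 := by
    intro m hm h0
    have h1 := (hcop _ hm).2
    have h2 : (2 : ℤ) ∣ (Int.gcd m 2 : ℤ) :=
      Int.dvd_coe_gcd (Int.dvd_of_emod_eq_zero h0) (dvd_refl _)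
    simp only at h1
    rw [h1] at h2
    omega
  have hmod0 : ∀ m, (m, (0 : ℤ)) ∈ Q → m = 1 ∨ m = -1 := by
    intro m hm
    have h1 := (hcop _ hm).2
    simp only [Int.gcd_zero_right] at h1
    omega
  have he : ∃ e : ℤ, ∀ m, (m, (0 : ℤ)) ∈ Q → m = e := by
    by_cases h : ((1 : ℤ), (0 : ℤ)) ∈ Q
    · refine ⟨1, fun m hm => ?_⟩
      rcases hmod0 m hm with rfl | rfl
      · rfl
      · exact absurd hm (by simpa using hneg _ h)
    · refine ⟨-1, fun m hm => ?_⟩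
      rcases hmod0 m hm with rfl | rfl
      · exact absurd hm h
      · rfl
  obtain ⟨e, he⟩ := he
  refine ⟨a, b, e, hbmax _ ha, ?_, hmod3 _ ha, hmod3 _ hb, ?_⟩
  · have := hd _ _ _ _ hb ha; omega
  rintro ⟨m, n⟩ hm
  rw [Finset.mem_coe, mem_rowsF]
  have hn0 : 0 ≤ n := hY _ hm
  have hn3 : n ≤ 3 := by
    have := hle _ hm
    simp only at this
    exact_mod_cast (abs_le.1 this).2
  have e1 := hd _ _ _ _ hm ha
  have e2 := hd _ _ _ _ hm hb
  simp only
  obtain rfl | rfl | rfl | rfl : n = 0 ∨ n = 1 ∨ n = 2 ∨ n = 3 := by omega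
  · exact Or.inl ⟨he _ hm, rfl⟩
  · right; left; omega
  · have := hmod2 _ hm
    right; right; left
    exact ⟨rfl, m / 2, by omega, by omega, by omega⟩
  · have := hmod3 _ hm
    have := hbmax _ hm
    have := hamin _ hm
    right; right; right
    obtain h | h : m % 3 = 1 ∨ m % 3 = 2 := by omega
    · left; exact ⟨rfl, m / 3, by omega, by omega, by omega⟩
    · right; exact ⟨rfl, m / 3, by omega, by omega, by omega⟩

lemma arith_core (k : ℕ) (a b A B C D N3 N4 : ℤ)
    (ha : a % 3 ≠ 0) (hb : b % 3 ≠ 0) (N : ℕ)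
    (hA : 3 * A ≤ k + a) (hB : b - k ≤ 3 * B) (hC : 6 * C ≤ k + 2 * a - 3)
    (hD : 2 * b - k - 3 ≤ 6 * D) (h3 : 3 * N3 ≤ (b - 1) + 3 - (a - 1) - (b - 1) % 3 - (1 - a) % 3)
    (h4 : 3 * N4 ≤ (b - 2) + 3 - (a - 2) - (b - 2) % 3 - (2 - a) % 3)
    (hN : (N : ℤ) ≤ 1 + (A + 1 - B) + (C + 1 - D) + N3 + N4) :
    N ≤ k + 4 ∧ (N = k + 4 → k % 6 = 2) ∧ (k % 6 = 0 ∨ k % 6 = 4 → N ≤ k + 2) := by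
  obtain ⟨q, r, hr, rfl⟩ : ∃ q r : ℕ, r < 6 ∧ k = 6 * q + r :=
    ⟨k / 6, k % 6, by omega, by omega⟩
  obtain ⟨s, hs⟩ : ∃ s : ℤ, a = 3 * s + 1 ∨ a = 3 * s + 2 := ⟨a / 3, by omega⟩
  obtain ⟨t, ht⟩ : ∃ t : ℤ, b = 3 * t + 1 ∨ b = 3 * t + 2 := ⟨b / 3, by omega⟩
  have h34 : N3 + N4 ≤ 2 * (t - s) + (b - 3 * t) - (a - 3 * s) + 1 := by
    clear hA hB hC hD hN
    rcases hs with rfl | rfl <;> rcases ht with rfl | rfl <;> omega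
  clear h3 h4 ha hb
  rcases hs with rfl | rfl <;> rcases ht with rfl | rfl <;>
  interval_cases r <;> push_cast at * <;> refine ⟨?_, ?_, ?_⟩ <;> omega

lemma arith_bound (k : ℕ) (hk : 3 ≤ k) (a b : ℤ) (hab : a ≤ b) (h : 3 * (b - a) ≤ k)
    (ha : a % 3 ≠ 0) (hb : b % 3 ≠ 0) (N : ℕ)
    (hN : N ≤ 1 + (((k + a) / 3 + 1 - (b - k + 2) / 3).toNat +
      (((k + 2 * a - 3) / 6 + 1 - (2 * b - k + 2) / 6).toNat +
      (((b - 1) / 3 + 1 - (a + 1) / 3).toNat + ((b - 2) / 3 + 1 - a / 3).toNat)))) :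
    N ≤ k + 4 ∧ (N = k + 4 → k % 6 = 2) ∧ (k % 6 = 0 ∨ k % 6 = 4 → N ≤ k + 2) := by
  have p1 : 0 ≤ (k + a) / 3 + 1 - (b - k + 2) / 3 := by clear hN; omega
  have p2 : 0 ≤ (k + 2 * a - 3) / 6 + 1 - (2 * b - k + 2) / 6 := by clear hN; omega
  have p3 : 0 ≤ (b - 1) / 3 + 1 - (a + 1) / 3 := by clear hN; omega
  have p4 : 0 ≤ (b - 2) / 3 + 1 - a / 3 := by clear hN; omega
  have e1 := Int.toNat_of_nonneg p1
  have e2 := Int.toNat_of_nonneg p2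
  have e3 := Int.toNat_of_nonneg p3
  have e4 := Int.toNat_of_nonneg p4
  refine arith_core k a b ((k + a) / 3) ((b - k + 2) / 3) ((k + 2 * a - 3) / 6)
    ((2 * b - k + 2) / 6) ((b - 1) / 3 + 1 - (a + 1) / 3) ((b - 2) / 3 + 1 - a / 3) ha hb N
    ?_ ?_ ?_ ?_ ?_ ?_ ?_
  · clear hN p1 p2 p3 p4 e1 e2 e3 e4; omega
  · clear hN p1 p2 p3 p4 e1 e2 e3 e4; omega
  · clear hN p1 p2 p3 p4 e1 e2 e3 e4; omega
  · clear hN p1 p2 p3 p4 e1 e2 e3 e4; omega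
  · clear hN p1 p2 p3 p4 e1 e2 e3 e4; omega
  · clear hN p1 p2 p3 p4 e1 e2 e3 e4; omega
  · zify at hN
    rw [e1, e2, e3, e4] at hN
    linarith

lemma bounds (k : ℕ) (hk : 3 ≤ k) (Q : Set (ℤ × ℤ)) (hQ : IsKNice k Q) (hY : YNonneg Q)
    (hH : HeightEq Q 3) : Q.Finite ∧ Q.ncard ≤ k + 4 ∧ (Q.ncard = k + 4 → k % 6 = 2) ∧
      (k % 6 = 0 ∨ k % 6 = 4 → Q.ncard ≤ k + 2) := by
  obtain ⟨a, b, e, hab, h, ha, hb, hsub⟩ := exists_rows k Q hQ hY hH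
  refine ⟨(Finset.finite_toSet _).subset hsub, arith_bound k hk a b hab h ha hb _ ?_⟩
  refine le_trans (Set.ncard_le_ncard hsub (Finset.finite_toSet _)) ?_
  rw [Set.ncard_coe_finset]
  exact card_rowsF_le _ _ _ _ _ _ _ _ _

lemma construction (q c : ℤ) (k : ℕ) (hq : 1 ≤ q) (hk : (k : ℤ) = 6 * q + 2) (hc : c = q / 2) :
    ∃ Q : Set (ℤ × ℤ), IsKNice k Q ∧ YNonneg Q ∧ HeightEq Q 3 ∧
      Q.Finite ∧ Q.ncard = k + 4 := by
  have key := mem_rowsF 1 (c - 2 * q) (2 * q + 1) (c - q) q 0 c 0 c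
  refine ⟨(rowsF 1 (c - 2 * q) (2 * q + 1) (c - q) q 0 c 0 c : Finset (ℤ × ℤ)),
    ⟨?_, ?_, ?_⟩, ?_, ⟨?_, ?_⟩, Finset.finite_toSet _, ?_⟩
  · rintro ⟨m, n⟩ hp
    rw [Finset.mem_coe, key] at hp
    simp only at hp
    rcases hp with ⟨rfl, rfl⟩ | ⟨rfl, h⟩ | ⟨rfl, j, h1, h2, rfl⟩ | ⟨rfl, j, h1, h2, rfl⟩ |
      ⟨rfl, j, h1, h2, rfl⟩
    · simp
    · simp
    · refine ⟨by simp, ?_⟩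
      rw [← Int.isCoprime_iff_gcd_eq_one]
      exact ⟨1, -j, by ring⟩
    · refine ⟨by simp, ?_⟩
      rw [← Int.isCoprime_iff_gcd_eq_one]
      exact ⟨1, -j, by ring⟩
    · refine ⟨by simp, ?_⟩
      rw [← Int.isCoprime_iff_gcd_eq_one]
      exact ⟨-1, j + 1, by ring⟩
  · rintro ⟨m, n⟩ hp hp'
    rw [Finset.mem_coe, key] at hp hp'
    simp only [Prod.fst_neg, Prod.snd_neg] at hp hp'
    omega
  · rintro ⟨m, n⟩ hp ⟨m', n'⟩ hp'
    rw [Finset.mem_coe, key] at hp hp'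
    simp only at hp hp' ⊢
    rw [abs_le]
    rcases hp with ⟨rfl, rfl⟩ | ⟨rfl, h⟩ | ⟨rfl, j, h1, h2, rfl⟩ | ⟨rfl, j, h1, h2, rfl⟩ |
      ⟨rfl, j, h1, h2, rfl⟩ <;>
    rcases hp' with ⟨rfl, rfl⟩ | ⟨rfl, h'⟩ | ⟨rfl, j', h1', h2', rfl⟩ |
      ⟨rfl, j', h1', h2', rfl⟩ | ⟨rfl, j', h1', h2', rfl⟩ <;> omega
  · rintro ⟨m, n⟩ hp
    rw [Finset.mem_coe, key] at hp
    simp only at hp ⊢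
    omega
  · rintro ⟨m, n⟩ hp
    rw [Finset.mem_coe, key] at hp
    simp only at hp ⊢
    rw [abs_le]
    push_cast
    omega
  · refine ⟨(1, 3), ?_, by simp⟩
    rw [Finset.mem_coe, key]
    right; right; right; left
    exact ⟨rfl, 0, le_refl _, by omega, by norm_num⟩
  · rw [Set.ncard_coe_finset, card_rowsF]
    omega

theorem kNice_height_three (k : ℕ) (hk : 3 ≤ k) :
    (∀ Q : Set (ℤ × ℤ), IsKNice k Q → YNonneg Q → HeightEq Q 3 →
      Q.Finite ∧ Q.ncard ≤ k + 4) ∧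
    (∀ Q : Set (ℤ × ℤ), IsKNice k Q → YNonneg Q → HeightEq Q 3 →
      Q.ncard = k + 4 → k % 6 = 2) ∧
    (k % 6 = 2 → ∃ Q : Set (ℤ × ℤ), IsKNice k Q ∧ YNonneg Q ∧ HeightEq Q 3 ∧
      Q.Finite ∧ Q.ncard = k + 4) ∧
    ((k % 6 = 0 ∨ k % 6 = 4) → ∀ Q : Set (ℤ × ℤ), IsKNice k Q → YNonneg Q →
      HeightEq Q 3 → Q.Finite ∧ Q.ncard ≤ k + 2) := by
  refine ⟨fun Q h1 h2 h3 => ?_, fun Q h1 h2 h3 => ?_, fun h => ?_, fun h Q h1 h2 h3 => ?_⟩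
  · have := bounds k hk Q h1 h2 h3
    exact ⟨this.1, this.2.1⟩
  · exact (bounds k hk Q h1 h2 h3).2.2.1
  · exact construction ((k / 6 : ℕ) : ℤ) _ k (by omega) (by omega) rfl
  · have := bounds k hk Q h1 h2 h3
    exact ⟨this.1, this.2.2.2 h⟩
end

section
/- The maximum size of a 1-nice subset of ℤ² is 3, and the maximum size of a 2-nice subset of ℤ² is 4. That is, every 1-nice set has at most 3 elements and some 1-nice set has exactly 3 elements, and every 2-nice set has at most 4 elements and some 2-nice set has exactly 4 elements. -/
/-- Two primitive vectors with zero determinant agree up to sign. -/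
theorem eq_or_neg_of_det (a b c d : ℤ) (h1 : Int.gcd a b = 1) (h2 : Int.gcd c d = 1)
    (h : a * d = c * b) : (c = a ∧ d = b) ∨ (c = -a ∧ d = -b) := by
  have i1 : IsCoprime a b := Int.isCoprime_iff_gcd_eq_one.2 h1
  have i2 : IsCoprime c d := Int.isCoprime_iff_gcd_eq_one.2 h2
  have e1 : a ∣ c := i1.dvd_of_dvd_mul_right ⟨d, h.symm⟩
  have e2 : c ∣ a := i2.dvd_of_dvd_mul_right ⟨b, h⟩
  have e3 : b ∣ d := i1.symm.dvd_of_dvd_mul_left ⟨c, by rw [h, mul_comm]⟩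
  have e4 : d ∣ b := i2.symm.dvd_of_dvd_mul_left ⟨a, by rw [← h, mul_comm]⟩
  have n1 := Int.natAbs_eq_natAbs_iff.1 (Int.natAbs_eq_of_dvd_dvd e1 e2)
  have n2 := Int.natAbs_eq_natAbs_iff.1 (Int.natAbs_eq_of_dvd_dvd e3 e4)
  rcases n1 with n1 | n1 <;> rcases n2 with n2 | n2
  · exact Or.inl ⟨n1.symm, n2.symm⟩
  · subst n1 n2
    have : a * d = 0 := by linarith
    rcases mul_eq_zero.1 this with h | h <;> subst h <;> simp
  · subst n1 n2
    have : c * b = 0 := by linarith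
    rcases mul_eq_zero.1 this with h | h <;> subst h <;> simp
  · right; constructor <;> omega

/-- The point of the projective line over `ZMod r` (for `r = 2, 3`) coded as a number in `[0, r]`. -/
def projClass (r : ℤ) (p : ℤ × ℤ) : ℤ := if r ∣ p.2 then r else p.1 * p.2 % r

theorem det_dvd (r : ℤ) (hr : 0 < r) (hsq : ∀ x : ℤ, ¬ r ∣ x → r ∣ x * x - 1) (p q : ℤ × ℤ)
    (h : projClass r p = projClass r q) : r ∣ p.1 * q.2 - q.1 * p.2 := by
  unfold projClass at h
  split_ifs at h with h1 h2 h2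
  · exact dvd_sub (h2.mul_left _) (h1.mul_left _)
  · exact absurd h.symm (Int.emod_lt_of_pos _ hr).ne
  · exact absurd h (Int.emod_lt_of_pos _ hr).ne
  · obtain ⟨u, hu⟩ := hsq _ h1
    obtain ⟨v, hv⟩ := hsq _ h2
    obtain ⟨w, hw⟩ := (Int.ModEq.dvd (Eq.symm h) :
      r ∣ p.1 * p.2 - q.1 * q.2)
    exact ⟨w * p.2 * q.2 - p.1 * q.2 * u + q.1 * p.2 * v, by
      linear_combination p.2 * q.2 * hw - p.1 * q.2 * hu + q.1 * p.2 * hv⟩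

theorem nice_bound (k : ℕ) (hsq : ∀ x : ℤ, ¬ ((k : ℤ) + 1) ∣ x → ((k : ℤ) + 1) ∣ x * x - 1)
    (Q : Set (ℤ × ℤ)) (hQ : IsKNice k Q) : Q.Finite ∧ Q.ncard ≤ k + 2 := by
  obtain ⟨hc, hn, hd⟩ := hQ
  have hr : (0 : ℤ) < (k : ℤ) + 1 := by positivity
  have hinj : Set.InjOn (projClass ((k : ℤ) + 1)) Q := by
    intro p hp q hq h
    have h0 := Int.eq_zero_of_abs_lt_dvd (det_dvd _ hr hsq p q h)
      (by have := hd p hp q hq; omega)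
    rcases eq_or_neg_of_det p.1 p.2 q.1 q.2 (hc p hp).2 (hc q hq).2 (by linarith) with h | h
    · exact (Prod.ext h.1 h.2).symm
    · exact absurd ((Prod.ext h.1 h.2 : q = -p) ▸ hq) (hn p hp)
  have hmaps : ∀ p ∈ Q, projClass ((k : ℤ) + 1) p ∈ (Finset.Icc (0 : ℤ) (k + 1) : Set ℤ) := by
    intro p _
    unfold projClass
    rw [Finset.coe_Icc, Set.mem_Icc]
    split_ifs
    · omega
    · exact ⟨Int.emod_nonneg _ hr.ne', (Int.emod_lt_of_pos _ hr).le⟩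
  have hfin := Finset.finite_toSet (Finset.Icc (0 : ℤ) (k + 1))
  refine ⟨Set.Finite.of_injOn hmaps hinj hfin, ?_⟩
  refine (Set.ncard_le_ncard_of_injOn _ hmaps hinj hfin).trans ?_
  rw [Set.ncard_coe_finset, Int.card_Icc]
  omega

theorem max_size_one_nice_and_two_nice :
    (∀ Q : Set (ℤ × ℤ), IsKNice 1 Q → Q.Finite ∧ Q.ncard ≤ 3) ∧
    (∃ Q : Set (ℤ × ℤ), IsKNice 1 Q ∧ Q.Finite ∧ Q.ncard = 3) ∧
    (∀ Q : Set (ℤ × ℤ), IsKNice 2 Q → Q.Finite ∧ Q.ncard ≤ 4) ∧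
    (∃ Q : Set (ℤ × ℤ), IsKNice 2 Q ∧ Q.Finite ∧ Q.ncard = 4) := by
  refine ⟨nice_bound 1 ?_, ?_, nice_bound 2 ?_, ?_⟩
  · intro x hx
    norm_num at hx ⊢
    have h : x % 2 = 1 := by omega
    apply Int.dvd_of_emod_eq_zero
    simp [Int.sub_emod, Int.mul_emod, h]
  · refine ⟨(({(1, 0), (0, 1), (1, 1)} : Finset (ℤ × ℤ)) : Set (ℤ × ℤ)), ?_,
      Finset.finite_toSet _, ?_⟩
    · simp only [IsKNice, Finset.mem_coe]
      decide
    · rw [Set.ncard_coe_finset]; rfl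
  · intro x hx
    norm_num at hx ⊢
    have h : x % 3 = 1 ∨ x % 3 = 2 := by omega
    apply Int.dvd_of_emod_eq_zero
    rcases h with h | h <;> simp [Int.sub_emod, Int.mul_emod, h]
  · refine ⟨(({(1, 0), (0, 1), (1, 1), (1, -1)} : Finset (ℤ × ℤ)) : Set (ℤ × ℤ)), ?_,
      Finset.finite_toSet _, ?_⟩
    · simp only [IsKNice, Finset.mem_coe]
      decide
    · rw [Set.ncard_coe_finset]; rfl
end

section
/- Let k ∈ ℕ and let Q ⊆ ℤ² be an inclusion-wise maximal k-nice set whose height is h, where 1 ≤ h ≤ k. Then there exists a k-nice set Q' equivalent to Q of height h such that (1,0) ∈ Q', (0,1) ∈ Q', (1,1) ∈ Q', and Q' ⊆ {0, 1, …, k} × {0, 1, …, h}. -/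
/-- Application of an integer `2 × 2` matrix to a pair of integers. -/
def matApply (A : Matrix (Fin 2) (Fin 2) ℤ) (p : ℤ × ℤ) : ℤ × ℤ :=
  (A 0 0 * p.1 + A 0 1 * p.2, A 1 0 * p.1 + A 1 1 * p.2)

/-- `Q` and `Q'` are equivalent if `Q'` is obtained from `A • Q`, for some unimodular
integer matrix `A`, by negating a subset of its elements. -/
def EquivSets (Q Q' : Set (ℤ × ℤ)) : Prop :=
  ∃ A : Matrix (Fin 2) (Fin 2) ℤ, |A.det| = 1 ∧
    ∃ f : ℤ × ℤ → ℤ × ℤ, (∀ x, f x = x ∨ f x = -x) ∧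
      Q' = f '' (matApply A '' Q)

/-- The pair is the preferred representative of `{p, -p}`. -/
def PosRep (p : ℤ × ℤ) : Prop := 0 < p.2 ∨ (p.2 = 0 ∧ 0 ≤ p.1)

open Classical in
/-- Choose the preferred representative. -/
noncomputable def flipRep (p : ℤ × ℤ) : ℤ × ℤ := if PosRep p then p else -p

lemma flipRep_or (p : ℤ × ℤ) : flipRep p = p ∨ flipRep p = -p := by
  unfold flipRep; split_ifs <;> simp

lemma posRep_flipRep (p : ℤ × ℤ) : PosRep (flipRep p) := by
  unfold flipRep
  split_ifs with hp
  · exact hp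
  · simp only [PosRep, Prod.fst_neg, Prod.snd_neg] at hp ⊢
    omega

lemma flipRep_of_pos {p : ℤ × ℤ} (hp : PosRep p) : flipRep p = p := by
  simp [flipRep, hp]

lemma flipRep_neg_of_pos {p : ℤ × ℤ} (hp : PosRep p) : flipRep (-p) = p := by
  unfold flipRep
  split_ifs with h
  · simp only [PosRep, Prod.fst_neg, Prod.snd_neg] at hp h
    ext <;> simp <;> omega
  · simp

lemma mem_or_neg_mem {k : ℕ} {Q : Set (ℤ × ℤ)} (hQ : IsKNice k Q)
    (hmax : ∀ Q' : Set (ℤ × ℤ), Q ⊆ Q' → IsKNice k Q' → Q' = Q)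
    (v : ℤ × ℤ) (hv0 : v ≠ (0, 0)) (hv : Int.gcd v.1 v.2 = 1)
    (hd : ∀ q ∈ Q, |v.1 * q.2 - q.1 * v.2| ≤ (k : ℤ)) : v ∈ Q ∨ -v ∈ Q := by
  by_contra! hc
  obtain ⟨h1, h2⟩ := hc
  obtain ⟨a, b, c⟩ := hQ
  apply h1
  rw [← hmax (insert v Q) (Set.subset_insert _ _) ?_]
  · exact Set.mem_insert _ _
  refine ⟨?_, ?_, ?_⟩
  · rintro p (rfl | hp)
    · exact ⟨hv0, hv⟩
    · exact a p hp
  · rintro p (rfl | hp) hn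
    · rcases hn with hn | hn
      · apply hv0
        have e1 := congrArg Prod.fst hn
        have e2 := congrArg Prod.snd hn
        simp only [Prod.fst_neg, Prod.snd_neg] at e1 e2
        ext <;> simp <;> omega
      · exact h2 hn
    · rcases hn with hn | hn
      · apply h2
        rw [← hn, neg_neg]; exact hp
      · exact b p hp hn
  · rintro p (rfl | hp) q (rfl | hq)
    · simp
    · exact hd q hq
    · rw [abs_sub_comm]; exact hd p hp
    · exact c p hp q hq

theorem maximal_kNice_equiv_normal_form (k h : ℕ) (hh1 : 1 ≤ h) (hhk : h ≤ k)
    (Q : Set (ℤ × ℤ)) (hQ : IsKNice k Q)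
    (hmax : ∀ Q' : Set (ℤ × ℤ), Q ⊆ Q' → IsKNice k Q' → Q' = Q)
    (hht : HeightEq Q h) :
    ∃ Q' : Set (ℤ × ℤ), EquivSets Q Q' ∧ IsKNice k Q' ∧ HeightEq Q' h ∧
      ((1 : ℤ), (0 : ℤ)) ∈ Q' ∧ ((0 : ℤ), (1 : ℤ)) ∈ Q' ∧ ((1 : ℤ), (1 : ℤ)) ∈ Q' ∧
      ∀ p ∈ Q', 0 ≤ p.1 ∧ p.1 ≤ (k : ℤ) ∧ 0 ≤ p.2 ∧ p.2 ≤ (h : ℤ) := by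
  -- the symmetrization of `Q`
  obtain ⟨R, hR⟩ : ∃ R : Set (ℤ × ℤ), ∀ p, p ∈ R ↔ (p ∈ Q ∨ -p ∈ Q) :=
    ⟨{p | p ∈ Q ∨ -p ∈ Q}, fun _ => Iff.rfl⟩
  have Rneg : ∀ p, p ∈ R → -p ∈ R := by
    intro p hp; rw [hR] at hp ⊢; rw [neg_neg]; exact hp.symm
  have Rgcd : ∀ p ∈ R, Int.gcd p.1 p.2 = 1 := by
    intro p hp
    rcases (hR p).1 hp with hp | hp
    · exact (hQ.1 p hp).2
    · simpa using (hQ.1 _ hp).2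
  have Rdet : ∀ p ∈ R, ∀ q ∈ R, |p.1 * q.2 - q.1 * p.2| ≤ (k : ℤ) := by
    intro p hp q hq
    rcases (hR p).1 hp with hp | hp <;> rcases (hR q).1 hq with hq | hq <;>
      have := hQ.2.2 _ hp _ hq <;> (try simp only [Prod.fst_neg, Prod.snd_neg] at this) <;>
      rw [abs_le] at this ⊢ <;> constructor <;> linarith [this.1, this.2]
  have Rht : ∀ p ∈ R, |p.2| ≤ (h : ℤ) := by
    intro p hp
    rcases (hR p).1 hp with hp | hp
    · exact hht.1 p hp
    · simpa using hht.1 _ hp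
  have hhk' : (h : ℤ) ≤ k := by exact_mod_cast hhk
  have hh1' : (1 : ℤ) ≤ h := by exact_mod_cast hh1
  have Rmax : ∀ v : ℤ × ℤ, v ≠ (0, 0) → Int.gcd v.1 v.2 = 1 →
      (∀ q ∈ R, 0 ≤ q.2 → |v.1 * q.2 - q.1 * v.2| ≤ (k : ℤ)) → v ∈ R := by
    intro v h0 hg hd
    rw [hR]
    refine mem_or_neg_mem hQ hmax v h0 hg ?_
    intro q hq
    have hqR : q ∈ R := (hR q).2 (Or.inl hq)
    rcases le_total 0 q.2 with h1 | h1
    · exact hd q hqR h1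
    · have := hd (-q) (Rneg q hqR) (by simpa using h1)
      simp only [Prod.fst_neg, Prod.snd_neg] at this
      rw [abs_le] at this ⊢
      constructor <;> linarith [this.1, this.2]
  -- an element of positive height
  obtain ⟨w, hwR, hwh⟩ : ∃ w ∈ R, w.2 = (h : ℤ) := by
    obtain ⟨p, hp, hph⟩ := hht.2
    have hpR : p ∈ R := (hR p).2 (Or.inl hp)
    rcases abs_choice p.2 with e | e
    · exact ⟨p, hpR, by rw [← e]; exact hph⟩
    · exact ⟨-p, Rneg p hpR, by simp only [Prod.snd_neg]; rw [← e]; exact hph⟩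
  -- the least floor
  obtain ⟨a, ⟨u, huR, hu0, hua⟩, hamin⟩ : ∃ a : ℤ,
      (∃ u ∈ R, 0 < u.2 ∧ u.1 / u.2 = a) ∧
      ∀ z : ℤ, (∃ u ∈ R, 0 < u.2 ∧ u.1 / u.2 = z) → a ≤ z := by
    apply Int.exists_least_of_bdd
    · refine ⟨-(|w.1| + k), ?_⟩
      rintro z ⟨q, hq, hq0, rfl⟩
      rw [Int.le_ediv_iff_mul_le hq0]
      have h1 := (abs_le.1 (Rdet q hq w hwR)).1
      have h2 := neg_abs_le w.1
      have h3 := abs_nonneg w.1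
      rw [hwh] at h1
      by_contra! hc
      have hk0 : (0 : ℤ) ≤ k := by positivity
      have h4 : q.1 ≤ -(|w.1| + k) * q.2 - 1 := by linarith
      have h5 : q.1 * h ≤ (-(|w.1| + k) * q.2 - 1) * h := by gcongr
      have h6 : -|w.1| * q.2 ≤ w.1 * q.2 := by gcongr
      have h7 : |w.1| * q.2 ≤ |w.1| * q.2 * h := le_mul_of_one_le_right (by positivity) hh1'
      have h8 : (k : ℤ) ≤ k * (q.2 * h) := le_mul_of_one_le_right hk0 (by nlinarith)
      nlinarith
    · exact ⟨_, w, hwR, by omega, rfl⟩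
  have hu1 : 0 ≤ u.1 - a * u.2 := by
    have := Int.ediv_mul_le u.1 hu0.ne'
    rw [hua] at this; linarith
  have hu2 : u.1 - a * u.2 + 1 ≤ u.2 := by
    have := Int.lt_ediv_add_one_mul_self u.1 hu0
    rw [hua] at this; linarith
  have key1 : ∀ q ∈ R, 0 < q.2 → 0 ≤ q.1 - a * q.2 := by
    intro q hq hq0
    have := (Int.le_ediv_iff_mul_le hq0).1 (hamin _ ⟨q, hq, hq0, rfl⟩)
    linarith
  have key2 : ∀ q ∈ R, 0 < q.2 → q.1 - a * q.2 ≤ k := by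
    intro q hq hq0
    have h1 := (abs_le.1 (Rdet q hq u huR)).2
    have h2 := (abs_le.1 (Rht q hq)).2
    have h3 : (q.1 - a * q.2) * u.2 - (u.1 - a * u.2) * q.2 ≤ k := by linarith
    have h4 : (u.1 - a * u.2) * q.2 ≤ (u.2 - 1) * k := by
      apply mul_le_mul <;> linarith
    refine le_of_mul_le_mul_right ?_ hu0
    linarith
  have key0 : ∀ q ∈ R, q.2 = 0 → q.1 = 1 ∨ q.1 = -1 := by
    intro q hq e
    have := Rgcd q hq
    rw [e, Int.gcd_zero_right] at this
    omega
  have m1 : ((1 : ℤ), (0 : ℤ)) ∈ R := by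
    apply Rmax
    · simp
    · simp
    · intro q hq _
      have := Rht q hq
      simp only [one_mul, mul_zero, sub_zero]
      linarith
  have m2 : (a, (1 : ℤ)) ∈ R := by
    apply Rmax
    · simp
    · simp
    · intro q hq h0
      simp only [mul_one]
      rcases h0.lt_or_eq with h0 | h0
      · have := key1 q hq h0
        have := key2 q hq h0
        rw [abs_le]; constructor <;> linarith
      · rw [← h0, abs_le]
        rcases key0 q hq h0.symm with e | e <;> rw [e] <;> constructor <;> linarith
  have m3 : (a + 1, (1 : ℤ)) ∈ R := by
    apply Rmax
    · simp
    · simp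
    · intro q hq h0
      simp only [mul_one]
      rcases h0.lt_or_eq with h0 | h0
      · have := key1 q hq h0
        have := key2 q hq h0
        have := (abs_le.1 (Rht q hq)).2
        rw [abs_le]; constructor <;> linarith
      · rw [← h0, abs_le]
        rcases key0 q hq h0.symm with e | e <;> rw [e] <;> constructor <;> linarith
  -- the transformed set
  have hA : ∀ q : ℤ × ℤ, matApply !![1, -a; 0, 1] q = (q.1 - a * q.2, q.2) := by
    intro q; simp [matApply]; ring
  obtain ⟨Q', hQ'⟩ : ∃ Q', Q' = flipRep '' (matApply !![1, -a; 0, 1] '' Q) := ⟨_, rfl⟩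
  have memQ' : ∀ p, p ∈ Q' ↔ PosRep p ∧ (p.1 + a * p.2, p.2) ∈ R := by
    intro p
    rw [hQ']
    constructor
    · rintro ⟨_, ⟨q, hq, rfl⟩, rfl⟩
      refine ⟨posRep_flipRep _, ?_⟩
      have hqR : q ∈ R := (hR q).2 (Or.inl hq)
      rw [hA]
      rcases flipRep_or (q.1 - a * q.2, q.2) with e | e <;> rw [e]
      · simpa using hqR
      · convert Rneg q hqR using 1
        ext
        · simp only [Prod.fst_neg, Prod.snd_neg]; ring
        · simp
    · rintro ⟨hp, hpR⟩
      rcases (hR _).1 hpR with hq | hq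
      · refine ⟨p, ⟨_, hq, ?_⟩, flipRep_of_pos hp⟩
        rw [hA]; ext <;> simp
      · refine ⟨-p, ⟨_, hq, ?_⟩, flipRep_neg_of_pos hp⟩
        rw [hA]; ext <;> simp
  refine ⟨Q', ⟨_, ?_, flipRep, flipRep_or, hQ'⟩, ⟨?_, ?_, ?_⟩, ⟨?_, ?_⟩, ?_, ?_, ?_, ?_⟩
  · simp [Matrix.det_fin_two]
  · intro p hp
    have := Rgcd _ ((memQ' p).1 hp).2
    simp only [Int.gcd_add_mul_right_left] at this
    refine ⟨?_, this⟩
    rintro rfl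
    simp at this
  · intro p hp hn
    have h1 := ((memQ' p).1 hp)
    have h2 := ((memQ' _).1 hn).1
    have h3 := Rgcd _ h1.2
    have h4 := h1.1
    simp only [Int.gcd_add_mul_right_left] at h3
    simp only [PosRep, Prod.fst_neg, Prod.snd_neg] at h2 h4
    have e1 : p.1 = 0 := by omega
    have e2 : p.2 = 0 := by omega
    rw [e1, e2] at h3
    simp at h3
  · intro p hp q hq
    have := Rdet _ ((memQ' p).1 hp).2 _ ((memQ' q).1 hq).2
    convert this using 2
    ring
  · intro p hp
    have := Rht _ ((memQ' p).1 hp).2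
    exact this
  · refine ⟨(w.1 - a * w.2, w.2), (memQ' _).2 ⟨?_, ?_⟩, ?_⟩
    · left; simp only; omega
    · simpa using hwR
    · simp [hwh]
  · rw [memQ']; exact ⟨by simp [PosRep], by simpa using m1⟩
  · rw [memQ']; exact ⟨by simp [PosRep], by simpa using m2⟩
  · rw [memQ']; exact ⟨by simp [PosRep], by simpa [add_comm] using m3⟩
  · intro p hp
    obtain ⟨h1, h2⟩ := (memQ' p).1 hp
    have h3 := (abs_le.1 (Rht _ h2)).2
    simp only at h3
    rcases h1 with h1 | ⟨h1, h4⟩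
    · have := key1 _ h2 h1
      have := key2 _ h2 h1
      simp only at *
      refine ⟨?_, ?_, ?_, ?_⟩ <;> linarith
    · have := key0 _ h2 h1
      simp only [h1, mul_zero, add_zero] at this
      refine ⟨h4, ?_, ?_, ?_⟩ <;> omega
end

section
/- For every integer ℓ ≥ 1, the sum of 1/(i·j) over all pairs of integers (i,j) with 1 ≤ i ≤ ℓ, 1 ≤ j ≤ ℓ, i + j ≥ ℓ + 1, and gcd(i,j) = 1 is equal to 1. -/
lemma aux_row (l i : ℕ) (hi : i ∈ Finset.Icc 1 l) :
    ∑ j ∈ Finset.Icc 1 l, (if l + 1 ≤ i + j ∧ Nat.gcd i j = 1 then (1 : ℝ) / ((i : ℝ) * (j : ℝ)) else 0)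
    = ∑ j ∈ Finset.Icc 1 l, (if l + 1 + 1 ≤ i + j ∧ Nat.gcd i j = 1 then (1 : ℝ) / ((i : ℝ) * (j : ℝ)) else 0)
      + (if Nat.gcd i (l + 1) = 1 then (1 : ℝ) / ((i : ℝ) * ((l + 1 - i : ℕ) : ℝ)) else 0) := by
  rw [Finset.mem_Icc] at hi
  have h : (if Nat.gcd i (l + 1) = 1 then (1 : ℝ) / ((i : ℝ) * ((l + 1 - i : ℕ) : ℝ)) else 0)
      = ∑ j ∈ Finset.Icc 1 l, (if j = l + 1 - i then
        (if Nat.gcd i (l + 1) = 1 then (1 : ℝ) / ((i : ℝ) * (j : ℝ)) else 0) else 0) := by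
    have hm : l + 1 - i ∈ Finset.Icc 1 l := by rw [Finset.mem_Icc]; omega
    rw [Finset.sum_ite_eq']
    simp only [hm, if_true]
  rw [h, ← Finset.sum_add_distrib]
  refine Finset.sum_congr rfl fun j hj => ?_
  by_cases hjj : j = l + 1 - i
  · have h1 : l + 1 = i + j := by omega
    have h2 : Nat.gcd i (l + 1) = Nat.gcd i j := by rw [h1]; simp
    have h3 : l + 1 ≤ i + j := by omega
    have h4 : ¬ (l + 1 + 1 ≤ i + j) := by omega
    rw [if_pos hjj]
    simp only [h2, h3, h4, true_and, false_and, if_false, zero_add]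
  · have : (l + 1 ≤ i + j) ↔ (l + 1 + 1 ≤ i + j) := by omega
    rw [if_neg hjj, add_zero]
    simp only [this]

lemma aux_refl (l : ℕ) :
    ∑ i ∈ Finset.Icc 1 l, (if Nat.gcd i (l + 1) = 1 then (1 : ℝ) / ((i : ℝ) * ((l + 1 - i : ℕ) : ℝ)) else 0)
    = ∑ i ∈ Finset.Icc 1 l, (if Nat.gcd i (l + 1) = 1 then (1 : ℝ) / ((i : ℝ) * ((l + 1 : ℕ) : ℝ)) else 0)
    + ∑ i ∈ Finset.Icc 1 l, (if Nat.gcd i (l + 1) = 1 then (1 : ℝ) / ((i : ℝ) * ((l + 1 : ℕ) : ℝ)) else 0) := by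
  have h : ∑ i ∈ Finset.Icc 1 l, (if Nat.gcd i (l + 1) = 1 then (1 : ℝ) / ((i : ℝ) * ((l + 1 : ℕ) : ℝ)) else 0)
    = ∑ i ∈ Finset.Icc 1 l, (if Nat.gcd i (l + 1) = 1 then (1 : ℝ) / (((l + 1 - i : ℕ) : ℝ) * ((l + 1 : ℕ) : ℝ)) else 0) := by
    refine Finset.sum_nbij' (fun i => l + 1 - i) (fun i => l + 1 - i) ?_ ?_ ?_ ?_ ?_
    · intro i hi; simp only [Finset.mem_Icc] at *; omega
    · intro i hi; simp only [Finset.mem_Icc] at *; omega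
    · intro i hi; simp only [Finset.mem_Icc] at *; omega
    · intro i hi; simp only [Finset.mem_Icc] at *; omega
    · intro i hi
      simp only [Finset.mem_Icc] at hi
      have h1 : l + 1 - (l + 1 - i) = i := by omega
      have h2 : Nat.gcd (l + 1 - i) (l + 1) = Nat.gcd i (l + 1) := by
        rw [Nat.gcd_comm, Nat.gcd_self_sub_right (by omega), Nat.gcd_comm]
      simp only [h1, h2]
  nth_rewrite 2 [h]
  rw [← Finset.sum_add_distrib]
  refine Finset.sum_congr rfl fun i hi => ?_
  rw [Finset.mem_Icc] at hi
  split_ifs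
  · have hi0 : (i : ℝ) ≠ 0 := by norm_cast; omega
    have hk : ((l + 1 - i : ℕ) : ℝ) ≠ 0 := by norm_cast; omega
    have hl : ((l + 1 : ℕ) : ℝ) ≠ 0 := by norm_cast
    have hs : ((l + 1 : ℕ) : ℝ) = i + ((l + 1 - i : ℕ) : ℝ) := by norm_cast; omega
    generalize ((l + 1 - i : ℕ) : ℝ) = k at *
    generalize ((l + 1 : ℕ) : ℝ) = n at *
    field_simp
    linarith
  · simp

lemma aux_main (l : ℕ) (hl : 1 ≤ l) :
    ∑ i ∈ Finset.Icc 1 l, ∑ j ∈ Finset.Icc 1 l,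
      (if l + 1 ≤ i + j ∧ Nat.gcd i j = 1 then (1 : ℝ) / ((i : ℝ) * (j : ℝ)) else 0) = 1 := by
  induction l, hl using Nat.le_induction with
  | base => simp
  | succ l hl ih =>
    rw [Finset.sum_congr rfl (aux_row l), Finset.sum_add_distrib, aux_refl] at ih
    rw [Finset.sum_Icc_succ_top (by omega)]
    simp_rw [Finset.sum_Icc_succ_top (show 1 ≤ l + 1 by omega)]
    rw [Finset.sum_add_distrib, add_assoc]
    refine Eq.trans ?_ ih
    congr 1
    have h0 : ¬ (l + 1 + 1 ≤ l + 1 + (l + 1) ∧ Nat.gcd (l + 1) (l + 1) = 1) := by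
      rw [Nat.gcd_self]; omega
    rw [if_neg h0, add_zero]
    congr 1
    · refine Finset.sum_congr rfl fun i hi => ?_
      rw [Finset.mem_Icc] at hi
      have : l + 1 + 1 ≤ i + (l + 1) := by omega
      simp only [this, true_and]
    · refine Finset.sum_congr rfl fun i hi => ?_
      rw [Finset.mem_Icc] at hi
      have : l + 1 + 1 ≤ l + 1 + i := by omega
      simp only [this, true_and]
      simp only [Nat.gcd_comm (l + 1) i, mul_comm ((l + 1 : ℕ) : ℝ) (i : ℝ)]

theorem sum_inv_mul_coprime_pairs_eq_one (ℓ : ℕ) (hℓ : 1 ≤ ℓ) :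
    ∑ p ∈ Finset.filter (fun p : ℕ × ℕ => ℓ + 1 ≤ p.1 + p.2 ∧ Nat.gcd p.1 p.2 = 1)
        (Finset.Icc 1 ℓ ×ˢ Finset.Icc 1 ℓ),
      (1 : ℝ) / ((p.1 : ℝ) * (p.2 : ℝ)) = 1 := by
  rw [Finset.sum_filter, Finset.sum_product]
  exact aux_main ℓ hℓ
end
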